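/- arXiv:1711.09221 — 4 statements merged into one kernel-verified Lean document; each statement's English description precedes it below -/
import Mathlib

section
/- Let X ⊆ ℝ^n be nonempty, compact and convex, let f : ℝ^n → ℝ be convex, and let g : ℝ^n → ℝ^S have every component convex, where S is a nonempty finite index set. Assume the feasible set F := { x ∈ X : g(x) ⪯ 0 } is nonempty, set f* := inf_{x ∈ F} f(x), and assume there exists μ* ∈ ℝ^S with μ* ⪰ 0 such that inf_{x ∈ X} ( f(x) + ⟨μ*, g(x)⟩ ) = f* (a geometric multiplier). If M > ∑_s μ*_s, then a pair (x̄, ρ̄) with x̄ ∈ X, ρ̄ ≥ 0 and g(x̄) ⪯ ρ̄·𝟏 minimizes (x,ρ) ↦ f(x) + M ρ over { (x,ρ) : x ∈ X, ρ ≥ 0, g(x) ⪯ ρ·𝟏 } if and only if ρ̄ = 0 and x̄ minimizes f over F; moreover the optimal value of the relaxed problem equals f*. -/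
/-!
On the relaxed feasible set, `g x ⪯ ρ • 𝟏` and `μ ⪰ 0` give
`f x + ⟨μ, g x⟩ ≤ f x + (∑ s, μ s) * ρ`, so a geometric multiplier makes `f*` a lower bound of the
penalized objective already for the smaller penalty `∑ s, μ s`. Since `ρ = 0` recovers the original
problem, both problems have optimal value `f*`, and a relaxed minimizer with `ρ > 0` would satisfy
`f* ≤ f x + (∑ s, μ s) * ρ < f x + M * ρ = f*`.
-/

section Minimizers

variable {α β : Type*} [PartialOrder β] {f : α → β} {s : Set α} {a : α} {v : β}

theorem isMinOn_iff_eq_of_isGLB (hv : IsGLB (f '' s) v) (ha : a ∈ s) :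
    IsMinOn f s a ↔ f a = v := by
  refine ⟨fun hmin => ?_, fun h x hx => h.trans_le (hv.1 (Set.mem_image_of_mem f hx))⟩
  have hleast : IsLeast (f '' s) (f a) :=
    ⟨Set.mem_image_of_mem f ha, Set.forall_mem_image.2 (isMinOn_iff.1 hmin)⟩
  exact hleast.isGLB.unique hv

end Minimizers

section ExactPenalty

variable {α S : Type*}

/-- The feasible set of the problem of minimizing over `x ∈ X` subject to `g x ⪯ 0`. -/
def feasibleSet (X : Set α) (g : α → S → ℝ) : Set α :=
  {x | x ∈ X ∧ ∀ s, g x s ≤ 0}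

/-- The feasible set of the relaxed problem: pairs `(x, ρ)` of a point of `X` and a common bound
`ρ ≥ 0` on the violation of all the constraints. -/
def relaxedFeasibleSet (X : Set α) (g : α → S → ℝ) : Set (α × ℝ) :=
  {p | p.1 ∈ X ∧ 0 ≤ p.2 ∧ ∀ s, g p.1 s ≤ p.2}

/-- The objective `(x, ρ) ↦ f x + M * ρ` of the relaxed problem with penalty parameter `M`. -/
def penalizedObjective (f : α → ℝ) (M : ℝ) (p : α × ℝ) : ℝ :=
  f p.1 + M * p.2

/-- The Lagrangian `f x + ⟨μ, g x⟩` as a function of the primal variable `x`. -/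
def lagrangian [Fintype S] (f : α → ℝ) (g : α → S → ℝ) (μ : S → ℝ) (x : α) : ℝ :=
  f x + ∑ s, μ s * g x s

variable {X : Set α} {f : α → ℝ} {g : α → S → ℝ} {c M v ρ : ℝ} {x : α}

theorem mk_zero_mem_relaxedFeasibleSet :
    (x, 0) ∈ relaxedFeasibleSet X g ↔ x ∈ feasibleSet X g := by
  simp only [relaxedFeasibleSet, feasibleSet, Set.mem_ofPred_eq, le_refl, true_and]

theorem penalizedObjective_mk_zero : penalizedObjective f M (x, 0) = f x := by
  simp only [penalizedObjective, mul_zero, add_zero]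

theorem image_feasibleSet_subset_image_relaxedFeasibleSet :
    f '' feasibleSet X g ⊆ penalizedObjective f M '' relaxedFeasibleSet X g := by
  rintro _ ⟨x, hx, rfl⟩
  exact ⟨(x, 0), mk_zero_mem_relaxedFeasibleSet.2 hx, penalizedObjective_mk_zero⟩

theorem penalizedObjective_mono (hcM : c ≤ M) {p : α × ℝ} (hp : 0 ≤ p.2) :
    penalizedObjective f c p ≤ penalizedObjective f M p :=
  add_le_add_right (mul_le_mul_of_nonneg_right hcM hp) (f p.1)

theorem isMinOn_penalizedObjective_iff_forall {p : α × ℝ} :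
    IsMinOn (penalizedObjective f M) (relaxedFeasibleSet X g) p ↔
      ∀ x ∈ X, ∀ ρ : ℝ, 0 ≤ ρ → (∀ s, g x s ≤ ρ) → f p.1 + M * p.2 ≤ f x + M * ρ :=
  ⟨fun hmin x hx ρ hρ hgx => isMinOn_iff.1 hmin (x, ρ) ⟨hx, hρ, hgx⟩,
    fun h q hq => h q.1 hq.1 q.2 hq.2.1 hq.2.2⟩

theorem isGLB_image_penalizedObjective (hv : IsGLB (f '' feasibleSet X g) v)
    (hlow : v ∈ lowerBounds (penalizedObjective f c '' relaxedFeasibleSet X g)) (hcM : c ≤ M) :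
    IsGLB (penalizedObjective f M '' relaxedFeasibleSet X g) v :=
  ⟨Set.forall_mem_image.2 fun _ hp =>
      (hlow (Set.mem_image_of_mem _ hp)).trans (penalizedObjective_mono hcM hp.2.1),
    fun _ hw => hv.2 (lowerBounds_mono_set image_feasibleSet_subset_image_relaxedFeasibleSet hw)⟩

theorem isMinOn_penalizedObjective_iff (hv : IsGLB (f '' feasibleSet X g) v)
    (hlow : v ∈ lowerBounds (penalizedObjective f c '' relaxedFeasibleSet X g)) (hcM : c < M)
    (hp : (x, ρ) ∈ relaxedFeasibleSet X g) :
    IsMinOn (penalizedObjective f M) (relaxedFeasibleSet X g) (x, ρ) ↔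
      ρ = 0 ∧ x ∈ feasibleSet X g ∧ IsMinOn f (feasibleSet X g) x := by
  rw [isMinOn_iff_eq_of_isGLB (isGLB_image_penalizedObjective hv hlow hcM.le) hp]
  constructor
  · intro hopt
    have hle : f x + M * ρ ≤ f x + c * ρ := hopt.trans_le (hlow (Set.mem_image_of_mem _ hp))
    obtain rfl : ρ = 0 := by
      by_contra hne
      have hρ : 0 < ρ := lt_of_le_of_ne hp.2.1 (Ne.symm hne)
      exact (mul_lt_mul_of_pos_right hcM hρ).not_ge (le_of_add_le_add_left hle)
    have hx := mk_zero_mem_relaxedFeasibleSet.1 hp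
    exact ⟨rfl, hx, (isMinOn_iff_eq_of_isGLB hv hx).2 (penalizedObjective_mk_zero.symm.trans hopt)⟩
  · rintro ⟨rfl, hx, hmin⟩
    exact penalizedObjective_mk_zero.trans ((isMinOn_iff_eq_of_isGLB hv hx).1 hmin)

variable [Fintype S] {μ : S → ℝ}

theorem lagrangian_le_penalizedObjective (hμ : ∀ s, 0 ≤ μ s) (hg : ∀ s, g x s ≤ ρ) :
    lagrangian f g μ x ≤ penalizedObjective f (∑ s, μ s) (x, ρ) := by
  simp only [lagrangian, penalizedObjective, Finset.sum_mul]
  gcongr with s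
  exacts [hμ s, hg s]

theorem mem_lowerBounds_image_penalizedObjective_of_lagrangian (hμ : ∀ s, 0 ≤ μ s)
    (hv : v ∈ lowerBounds (lagrangian f g μ '' X)) :
    v ∈ lowerBounds (penalizedObjective f (∑ s, μ s) '' relaxedFeasibleSet X g) :=
  Set.forall_mem_image.2 fun _ hp =>
    (hv (Set.mem_image_of_mem _ hp.1)).trans (lagrangian_le_penalizedObjective hμ hp.2.2)

theorem bddBelow_image_lagrangian [TopologicalSpace α] (hX : IsCompact X) (hf : ContinuousOn f X)
    (hg : ∀ s, ContinuousOn (fun x => g x s) X) : BddBelow (lagrangian f g μ '' X) :=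
  hX.bddBelow_image (hf.add (continuousOn_finsetSum _ fun s _ => continuousOn_const.mul (hg s)))

end ExactPenalty

theorem stmt_3_general {α S : Type*} [Fintype S] (X : Set α) (f : α → ℝ) (g : α → S → ℝ)
    (hFne : {x | x ∈ X ∧ ∀ s, g x s ≤ 0}.Nonempty)
    (fstar : ℝ)
    (hfstar : fstar = sInf {y | ∃ x ∈ X, (∀ s, g x s ≤ 0) ∧ f x = y})
    (μstar : S → ℝ) (hμpos : ∀ s, 0 ≤ μstar s)
    (hbdd : BddBelow {y | ∃ x ∈ X, f x + ∑ s, μstar s * g x s = y})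
    (hmult : sInf {y | ∃ x ∈ X, f x + ∑ s, μstar s * g x s = y} = fstar)
    (M : ℝ) (hM : M > ∑ s, μstar s)
    (xbar : α) (ρbar : ℝ)
    (hxbar : xbar ∈ X) (hρbar : 0 ≤ ρbar) (hgxbar : ∀ s, g xbar s ≤ ρbar) :
    ((∀ x ∈ X, ∀ ρ : ℝ, 0 ≤ ρ → (∀ s, g x s ≤ ρ) →
        f xbar + M * ρbar ≤ f x + M * ρ)
      ↔ (ρbar = 0 ∧ (∀ s, g xbar s ≤ 0) ∧
          ∀ x ∈ X, (∀ s, g x s ≤ 0) → f xbar ≤ f x))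
    ∧ sInf {y | ∃ x ∈ X, ∃ ρ : ℝ, 0 ≤ ρ ∧ (∀ s, g x s ≤ ρ) ∧ f x + M * ρ = y} = fstar := by
  have hfeasible : {y | ∃ x ∈ X, (∀ s, g x s ≤ 0) ∧ f x = y} = f '' feasibleSet X g := by
    simp only [feasibleSet, Set.image, Set.mem_ofPred_eq, and_assoc]
  have hrelaxed : {y | ∃ x ∈ X, ∃ ρ : ℝ, 0 ≤ ρ ∧ (∀ s, g x s ≤ ρ) ∧ f x + M * ρ = y} =
      penalizedObjective f M '' relaxedFeasibleSet X g := by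
    simp [relaxedFeasibleSet, penalizedObjective, Set.image, and_assoc]
  have hlow : fstar ∈ lowerBounds (penalizedObjective f (∑ s, μstar s) '' relaxedFeasibleSet X g) :=
    mem_lowerBounds_image_penalizedObjective_of_lagrangian hμpos fun _ hy =>
      hmult.symm.trans_le (csInf_le hbdd hy)
  have hbddFeasible : BddBelow (f '' feasibleSet X g) :=
    ⟨fstar, lowerBounds_mono_set image_feasibleSet_subset_image_relaxedFeasibleSet hlow⟩
  have hglb : IsGLB (f '' feasibleSet X g) fstar := by
    rw [hfstar, hfeasible]
    exact isGLB_csInf (hFne.image f) hbddFeasible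
  have hglbRelaxed := isGLB_image_penalizedObjective hglb hlow hM.le
  refine ⟨?_, hrelaxed ▸ hglbRelaxed.csInf_eq hglbRelaxed.nonempty⟩
  have hiff := isMinOn_penalizedObjective_iff hglb hlow hM ⟨hxbar, hρbar, hgxbar⟩
  rw [isMinOn_penalizedObjective_iff_forall] at hiff
  simpa only [isMinOn_iff, feasibleSet, Set.mem_ofPred_eq, hxbar, true_and, and_imp] using hiff

/-- Proposition 1 of the paper.
Under an exact-penalty condition `M > ∑ s, μ* s` on a geometric multiplier `μ*`,
a feasible pair `(x̄, ρ̄)` of the relaxed problem is optimal for it if and only if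
`ρ̄ = 0` and `x̄` minimizes `f` over the feasible set `F = {x ∈ X : g x ⪯ 0}`;
moreover the optimal value of the relaxed problem equals `f*`. -/
theorem stmt_3 {n : ℕ} {S : Type} [Fintype S] [Nonempty S]
    (X : Set (Fin n → ℝ)) (hXne : X.Nonempty) (hXcp : IsCompact X) (hXcv : Convex ℝ X)
    (f : (Fin n → ℝ) → ℝ) (hf : ConvexOn ℝ Set.univ f)
    (g : (Fin n → ℝ) → S → ℝ) (hg : ∀ s, ConvexOn ℝ Set.univ (fun x => g x s))
    (hFne : {x | x ∈ X ∧ ∀ s, g x s ≤ 0}.Nonempty)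
    (fstar : ℝ)
    (hfstar : fstar = sInf {y | ∃ x ∈ X, (∀ s, g x s ≤ 0) ∧ f x = y})
    (μstar : S → ℝ) (hμpos : ∀ s, 0 ≤ μstar s)
    (hmult : sInf {y | ∃ x ∈ X, f x + ∑ s, μstar s * g x s = y} = fstar)
    (M : ℝ) (hM : M > ∑ s, μstar s)
    (xbar : Fin n → ℝ) (ρbar : ℝ)
    (hxbar : xbar ∈ X) (hρbar : 0 ≤ ρbar) (hgxbar : ∀ s, g xbar s ≤ ρbar) :
    ((∀ x ∈ X, ∀ ρ : ℝ, 0 ≤ ρ → (∀ s, g x s ≤ ρ) →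
        f xbar + M * ρbar ≤ f x + M * ρ)
      ↔ (ρbar = 0 ∧ (∀ s, g xbar s ≤ 0) ∧
          ∀ x ∈ X, (∀ s, g x s ≤ 0) → f xbar ≤ f x))
    ∧ sInf {y | ∃ x ∈ X, ∃ ρ : ℝ, 0 ≤ ρ ∧ (∀ s, g x s ≤ ρ) ∧ f x + M * ρ = y} = fstar :=
  stmt_3_general X f g hFne fstar hfstar μstar hμpos
    (bddBelow_image_lagrangian hXcp hf.locallyLipschitz.continuous.continuousOn
      fun s => (hg s).locallyLipschitz.continuous.continuousOn)
    hmult M hM xbar ρbar hxbar hρbar hgxbar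
end

section
/- Let X ⊆ ℝ^n be nonempty, compact and convex, let f : ℝ^n → ℝ be convex, let g : ℝ^n → ℝ^S have every component convex, with S a nonempty finite index set, let δ ∈ ℝ^S and M > 0, and define q(μ) := inf_{x ∈ X} ( f(x) + ⟨μ, g(x)⟩ ). If (x*, ρ*) minimizes (x,ρ) ↦ f(x) + M ρ over { (x,ρ) : x ∈ X, ρ ≥ 0, g(x) + δ ⪯ ρ·𝟏 }, then f(x*) + M ρ* = sup_{μ ∈ Δ_M} ( q(μ) + ⟨μ, δ⟩ ). -/
/-!
Adjoining the slack `ρ` as a variable turns the relaxed problem into a convex program that always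
satisfies Slater's condition (take `ρ` large), so Hahn-Banach separation gives a Lagrange multiplier
`μ ⪰ 0` with `f x + M ρ + ⟨μ, g x + δ - ρ 𝟏⟩` at least the optimal value for all `x ∈ X`, `ρ ≥ 0`.
Letting `ρ → ∞` forces `∑ μ ≤ M`, and `ρ = 0` says that the dual value at `μ` is at least the primal
optimum.
-/

open Set

theorem nonpos_of_forall_mul_le {𝕜 : Type*} [Field 𝕜] [LinearOrder 𝕜] [IsStrictOrderedRing 𝕜]
    {a b : 𝕜} (h : ∀ c, 0 ≤ c → c * a ≤ b) : a ≤ 0 := by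
  by_contra! ha
  have hb : 0 ≤ b := by simpa using h 0 le_rfl
  have := h ((b + 1) / a) (by positivity)
  rw [div_mul_cancel₀ _ ha.ne'] at this
  linarith

section Convex

variable {𝕜 E : Type*} [Semiring 𝕜] [PartialOrder 𝕜] [AddCommMonoid E] [Module 𝕜 E] {s : Set E}

theorem convexOn_pi {ι : Type*} {β : ι → Type*} [∀ i, AddCommMonoid (β i)]
    [∀ i, PartialOrder (β i)] [∀ i, SMul 𝕜 (β i)] {f : E → ∀ i, β i} (hs : Convex 𝕜 s)
    (hf : ∀ i, ConvexOn 𝕜 s fun x ↦ f x i) : ConvexOn 𝕜 s f :=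
  ⟨hs, fun _ hx _ hy _ _ ha hb hab i ↦ (hf i).2 hx hy ha hb hab⟩

theorem convex_upperClosure_image {β : Type*} [AddCommMonoid β] [PartialOrder β]
    [IsOrderedAddMonoid β] [Module 𝕜 β] [PosSMulMono 𝕜 β] {f : E → β} (hf : ConvexOn 𝕜 s f) :
    Convex 𝕜 (upperClosure (f '' s) : Set β) := by
  convert hf.convex_epigraph.linear_image (LinearMap.snd 𝕜 E β)
  ext y
  simp [and_assoc]

end Convex

section LagrangeMultiplier

variable {E F : Type*} [AddCommGroup E] [Module ℝ E]
  [AddCommGroup F] [Module ℝ F] [PartialOrder F] [IsOrderedAddMonoid F] [PosSMulMono ℝ F]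
  [TopologicalSpace F] [IsTopologicalAddGroup F] [ContinuousSMul ℝ F] {K : Set E}

theorem exists_nonneg_strongDual_le_of_notMem_interior_Iic {φ : E → F} {w : F}
    (hφ : ConvexOn ℝ K φ) (hw : (interior (Iic w)).Nonempty)
    (hK : ∀ x ∈ K, φ x ∉ interior (Iic w)) :
    ∃ l : StrongDual ℝ F, (∀ v, 0 ≤ v → 0 ≤ l v) ∧ (∀ x ∈ K, l w ≤ l (φ x)) ∧
      ∀ u ∈ interior (Iic w), ∀ x ∈ K, l u < l (φ x) := by
  have hdisj : Disjoint (interior (Iic w)) (upperClosure (φ '' K) : Set F) := by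
    refine disjoint_left.2 fun u hu hu' ↦ ?_
    obtain ⟨_, ⟨x, hx, rfl⟩, hxu⟩ := mem_upperClosure.1 hu'
    exact hK x hx ((isLowerSet_Iic w).interior hxu hu)
  have hconv : Convex ℝ (Iic w) := convex_Iic w
  obtain ⟨l, r, hlt, hle⟩ := geometric_hahn_banach_open hconv.interior isOpen_interior
    (convex_upperClosure_image hφ) hdisj
  have hle_image : ∀ x ∈ K, r ≤ l (φ x) := fun x hx ↦
    hle _ (subset_upperClosure (mem_image_of_mem φ hx))
  have hIic : ∀ u ≤ w, l u ≤ r := by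
    have hclosure : closure (interior (Iic w)) ⊆ {u | l u ≤ r} :=
      closure_minimal (fun u hu ↦ (hlt u hu).le) (isClosed_le l.continuous continuous_const)
    rw [hconv.closure_interior_eq_closure_of_nonempty_interior hw] at hclosure
    exact fun u hu ↦ hclosure (subset_closure hu)
  refine ⟨l, fun v hv ↦ ?_, fun x hx ↦ (hIic w le_rfl).trans (hle_image x hx),
    fun u hu x hx ↦ (hlt u hu).trans_le (hle_image x hx)⟩
  refine neg_nonpos.1 (nonpos_of_forall_mul_le (b := r - l w) fun c hc ↦ ?_)
  have := hIic (w - c • v) (sub_le_self w (smul_nonneg hc hv))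
  rw [map_sub, map_smul, smul_eq_mul] at this
  linarith

theorem exists_lagrange_multiplier_of_slater {f : E → ℝ} {g : E → F} {p : ℝ}
    (hf : ConvexOn ℝ K f) (hg : ConvexOn ℝ K g) (hp : ∀ x ∈ K, g x ≤ 0 → p ≤ f x)
    (hslater : ∃ x ∈ K, g x ∈ interior (Iic 0)) :
    ∃ μ : StrongDual ℝ F, (∀ v, 0 ≤ v → 0 ≤ μ v) ∧ ∀ x ∈ K, p ≤ f x + μ (g x) := by
  obtain ⟨x₀, hx₀, hgx₀⟩ := hslater
  have hgf : ConvexOn ℝ K fun x ↦ (g x, f x) :=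
    ⟨hf.1, fun _ hx _ hy _ _ ha hb hab ↦ ⟨hg.2 hx hy ha hb hab, hf.2 hx hy ha hb hab⟩⟩
  have hint : interior (Iic ((0 : F), p)) = interior (Iic 0) ×ˢ Iio p := by
    rw [← Iic_prod_Iic, interior_prod_eq, interior_Iic]
  obtain ⟨l, hl_nonneg, hl_le, hl_lt⟩ :=
    exists_nonneg_strongDual_le_of_notMem_interior_Iic (w := ((0 : F), p)) hgf
      ⟨(g x₀, p - 1), hint ▸ ⟨hgx₀, sub_one_lt p⟩⟩
      (fun x hx hmem ↦ by
        rw [hint] at hmem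
        exact (hp x hx (mem_Iic.1 (interior_subset hmem.1))).not_gt hmem.2)
  set c := l (0, 1)
  have hl : ∀ v t, l (v, t) = l (v, 0) + t * c := fun v t ↦ by
    rw [← smul_eq_mul, ← map_smul, ← map_add]
    simp
  have hc : 0 < c := by
    have h : l (g x₀, min p (f x₀) - 1) < l (g x₀, f x₀) :=
      hl_lt _ (hint ▸ ⟨hgx₀, mem_Iio.2 ((sub_one_lt _).trans_le (min_le_left p (f x₀)))⟩) x₀ hx₀
    rw [hl, hl _ (f x₀), add_lt_add_iff_left] at h
    have hlt : min p (f x₀) - 1 < f x₀ := (sub_one_lt _).trans_le (min_le_right _ _)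
    nlinarith
  refine ⟨c⁻¹ • l.comp (ContinuousLinearMap.inl ℝ F ℝ), fun v hv ↦ ?_, fun x hx ↦ ?_⟩
  · exact mul_nonneg (inv_nonneg.2 hc.le) (hl_nonneg (v, 0) ⟨hv, le_rfl⟩)
  · have h : l (0, p) ≤ l (g x, f x) := hl_le x hx
    rw [hl 0, hl (g x), Prod.mk_zero_zero, map_zero, zero_add] at h
    change p ≤ f x + c⁻¹ * l (g x, 0)
    field_simp
    linarith

variable {ι : Type*} [Fintype ι] {f : E → ℝ} {g : E → ι → ℝ} {p : ℝ}

theorem exists_lagrange_multiplier_of_slater_pi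
    (hf : ConvexOn ℝ K f) (hg : ∀ i, ConvexOn ℝ K fun x ↦ g x i)
    (hp : ∀ x ∈ K, (∀ i, g x i ≤ 0) → p ≤ f x) (hslater : ∃ x ∈ K, ∀ i, g x i < 0) :
    ∃ μ : ι → ℝ, (∀ i, 0 ≤ μ i) ∧ ∀ x ∈ K, p ≤ f x + ∑ i, μ i * g x i := by
  classical
  obtain ⟨x₀, hx₀, hgx₀⟩ := hslater
  have hint : g x₀ ∈ interior (Iic 0) := by
    rw [← pi_univ_Iic, interior_pi_set finite_univ]
    simpa using hgx₀
  obtain ⟨μ, hμ, hle⟩ :=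
    exists_lagrange_multiplier_of_slater hf (convexOn_pi hf.1 hg) hp ⟨x₀, hx₀, hint⟩
  refine ⟨fun i ↦ μ (Pi.single i 1), fun i ↦ hμ _ (Pi.single_nonneg.2 zero_le_one),
    fun x hx ↦ (hle x hx).trans_eq ?_⟩
  congr 1
  conv_lhs => rw [← Finset.univ_sum_single (g x), map_sum]
  refine Finset.sum_congr rfl fun i _ ↦ ?_
  rw [mul_comm, ← smul_eq_mul, ← map_smul, ← Pi.single_smul, smul_eq_mul, mul_one]

theorem exists_multiplier_sum_le_of_slack_penalty {M : ℝ} (hK : K.Nonempty)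
    (hf : ConvexOn ℝ K f) (hg : ∀ i, ConvexOn ℝ K fun x ↦ g x i)
    (hp : ∀ x ∈ K, ∀ ρ, 0 ≤ ρ → (∀ i, g x i ≤ ρ) → p ≤ f x + M * ρ) :
    ∃ μ : ι → ℝ, (∀ i, 0 ≤ μ i) ∧ ∑ i, μ i ≤ M ∧ ∀ x ∈ K, p ≤ f x + ∑ i, μ i * g x i := by
  have hconv : Convex ℝ (K ×ˢ Ici (0 : ℝ)) := hf.1.prod (convex_Ici 0)
  have hfst {h : E → ℝ} (hh : ConvexOn ℝ K h) : ConvexOn ℝ (K ×ˢ Ici (0 : ℝ)) fun z ↦ h z.1 :=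
    (hh.comp_linearMap (LinearMap.fst ℝ E ℝ)).subset (fun _ hz ↦ hz.1) hconv
  have hcost : ConvexOn ℝ (K ×ˢ Ici (0 : ℝ)) fun z ↦ f z.1 + M * z.2 :=
    (hfst hf).add ((M • LinearMap.snd ℝ E ℝ).convexOn hconv)
  have hconstraint (i : ι) : ConvexOn ℝ (K ×ˢ Ici (0 : ℝ)) fun z ↦ g z.1 i - z.2 :=
    (hfst (hg i)).sub ((LinearMap.snd ℝ E ℝ).concaveOn hconv)
  obtain ⟨x₀, hx₀⟩ := hK
  obtain ⟨b, hb⟩ := (finite_range (g x₀)).bddAbove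
  have hslater : ∃ z ∈ K ×ˢ Ici (0 : ℝ), ∀ i, g z.1 i - z.2 < 0 := by
    refine ⟨(x₀, |b| + 1), ⟨hx₀, by simp only [mem_Ici]; positivity⟩, fun i ↦ ?_⟩
    linarith [hb (mem_range_self i), le_abs_self b]
  obtain ⟨μ, hμ, hle⟩ := exists_lagrange_multiplier_of_slater_pi hcost hconstraint
    (fun z hz hgz ↦ hp z.1 hz.1 z.2 hz.2 fun i ↦ sub_nonpos.1 (hgz i)) hslater
  replace hle : ∀ x ∈ K, ∀ ρ, 0 ≤ ρ →
      p ≤ f x + ∑ i, μ i * g x i + ρ * (M - ∑ i, μ i) := fun x hx ρ hρ ↦ by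
    refine (hle (x, ρ) ⟨hx, hρ⟩).trans_eq ?_
    simp only [mul_sub, Finset.sum_sub_distrib, ← Finset.sum_mul]
    ring
  refine ⟨μ, hμ, sub_nonpos.1 (nonpos_of_forall_mul_le
    (b := f x₀ + ∑ i, μ i * g x₀ i - p) fun ρ hρ ↦ ?_), fun x hx ↦ ?_⟩
  · linarith [hle x₀ hx₀ ρ hρ]
  · simpa using hle x hx 0 le_rfl

end LagrangeMultiplier

theorem sum_mul_le_mul_of_sum_le {ι R : Type*} [Fintype ι] [CommSemiring R] [PartialOrder R]
    [IsOrderedRing R] {μ v : ι → R} {M ρ : R} (hμ : ∀ i, 0 ≤ μ i) (hM : ∑ i, μ i ≤ M)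
    (hρ : 0 ≤ ρ) (hv : ∀ i, v i ≤ ρ) : ∑ i, μ i * v i ≤ M * ρ :=
  calc
    ∑ i, μ i * v i ≤ ∑ i, μ i * ρ :=
      Finset.sum_le_sum fun i _ ↦ mul_le_mul_of_nonneg_left (hv i) (hμ i)
    _ = (∑ i, μ i) * ρ := (Finset.sum_mul ..).symm
    _ ≤ M * ρ := mul_le_mul_of_nonneg_right hM hρ

theorem bddBelow_lagrangian_of_isCompact {E S : Type*} [TopologicalSpace E] [Fintype S]
    {X : Set E} (hX : IsCompact X) {f : E → ℝ} (hf : ContinuousOn f X) {g : E → S → ℝ}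
    (hg : ∀ s, ContinuousOn (fun x ↦ g x s) X) (μ : S → ℝ) :
    BddBelow {y | ∃ x ∈ X, f x + ∑ s, μ s * g x s = y} :=
  hX.bddBelow_image (hf.add (continuousOn_finsetSum _ fun s _ ↦ (hg s).const_mul (μ s)))

/-- Since `sInf` of a set of reals that is unbounded below is `0`, the multipliers at which the dual
function would be `-∞` are excluded explicitly. -/
theorem stmt_11_general {E S : Type*} [AddCommGroup E] [Module ℝ E] [Fintype S] {X : Set E}
    {f : E → ℝ} (hf : ConvexOn ℝ X f) {g : E → S → ℝ} (hg : ∀ s, ConvexOn ℝ X fun x ↦ g x s)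
    (δ : S → ℝ) {M : ℝ} {q : (S → ℝ) → ℝ}
    (hq : ∀ μ, q μ = sInf {y | ∃ x ∈ X, f x + ∑ s, μ s * g x s = y})
    {xstar : E} {ρstar : ℝ}
    (hfeas : xstar ∈ X ∧ 0 ≤ ρstar ∧ ∀ s, g xstar s + δ s ≤ ρstar)
    (hmin : ∀ x ρ, x ∈ X → 0 ≤ ρ → (∀ s, g x s + δ s ≤ ρ) →
      f xstar + M * ρstar ≤ f x + M * ρ) :
    IsGreatest {y | ∃ μ : S → ℝ, ((∀ s, 0 ≤ μ s) ∧ ∑ s, μ s ≤ M) ∧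
      BddBelow {y | ∃ x ∈ X, f x + ∑ s, μ s * g x s = y} ∧ q μ + ∑ s, μ s * δ s = y}
      (f xstar + M * ρstar) := by
  obtain ⟨hxstar, hρstar, hslack⟩ := hfeas
  have weak_duality (μ : S → ℝ) (hμ : ∀ s, 0 ≤ μ s) (hμM : ∑ s, μ s ≤ M)
      (hbdd : BddBelow {y | ∃ x ∈ X, f x + ∑ s, μ s * g x s = y}) :
      q μ + ∑ s, μ s * δ s ≤ f xstar + M * ρstar := by
    have hqμ : q μ ≤ f xstar + ∑ s, μ s * g xstar s := hq μ ▸ csInf_le hbdd ⟨xstar, hxstar, rfl⟩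
    have hpenalty := sum_mul_le_mul_of_sum_le hμ hμM hρstar hslack
    simp only [mul_add, Finset.sum_add_distrib] at hpenalty
    linarith
  obtain ⟨μ, hμ, hμM, hle⟩ := exists_multiplier_sum_le_of_slack_penalty ⟨xstar, hxstar⟩ hf
    (fun s ↦ (hg s).add_const (δ s)) fun x hx ρ hρ hxρ ↦ hmin x ρ hx hρ hxρ
  have hlower : f xstar + M * ρstar - ∑ s, μ s * δ s ∈
      lowerBounds {y | ∃ x ∈ X, f x + ∑ s, μ s * g x s = y} := by
    rintro _ ⟨x, hx, rfl⟩
    have := hle x hx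
    simp only [Pi.add_apply, mul_add, Finset.sum_add_distrib] at this
    linarith
  have strong_duality : f xstar + M * ρstar - ∑ s, μ s * δ s ≤ q μ :=
    hq μ ▸ le_csInf ⟨_, xstar, hxstar, rfl⟩ hlower
  refine ⟨⟨μ, ⟨hμ, hμM⟩, ⟨_, hlower⟩, (weak_duality μ hμ hμM ⟨_, hlower⟩).antisymm ?_⟩, ?_⟩
  · linarith
  · rintro _ ⟨ν, ⟨hν, hνM⟩, hbdd, rfl⟩
    exact weak_duality ν hν hνM hbdd

/-- Corollary 1 of the paper.
If `(x*, ρ*)` minimizes the local relaxed problem, then its optimal cost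
`f x* + M ρ*` equals `sup_{μ ∈ Δ_M} (q μ + ⟨μ, δ⟩)`, the value of the local term
of the second dual function. -/
theorem stmt_11 {n : ℕ} {S : Type} [Fintype S] [Nonempty S]
    (X : Set (Fin n → ℝ)) (hXne : X.Nonempty) (hXcp : IsCompact X) (hXcv : Convex ℝ X)
    (f : (Fin n → ℝ) → ℝ) (hf : ConvexOn ℝ Set.univ f)
    (g : (Fin n → ℝ) → S → ℝ) (hg : ∀ s, ConvexOn ℝ Set.univ (fun x => g x s))
    (δ : S → ℝ) (M : ℝ) (hM : 0 < M)
    (q : (S → ℝ) → ℝ)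
    (hq : ∀ μ : S → ℝ, q μ = sInf {y | ∃ x ∈ X, f x + ∑ s, μ s * g x s = y})
    (xstar : Fin n → ℝ) (ρstar : ℝ)
    (hfeas : xstar ∈ X ∧ 0 ≤ ρstar ∧ ∀ s, g xstar s + δ s ≤ ρstar)
    (hmin : ∀ (x : Fin n → ℝ) (ρ : ℝ), x ∈ X → 0 ≤ ρ → (∀ s, g x s + δ s ≤ ρ) →
      f xstar + M * ρstar ≤ f x + M * ρ) :
    f xstar + M * ρstar
      = sSup {y | ∃ μ : S → ℝ, ((∀ s, 0 ≤ μ s) ∧ ∑ s, μ s ≤ M) ∧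
          q μ + ∑ s, μ s * δ s = y} := by
  have hbdd := bddBelow_lagrangian_of_isCompact hXcp hf.locallyLipschitz.continuous.continuousOn
    fun s ↦ (hg s).locallyLipschitz.continuous.continuousOn
  simpa only [hbdd, true_and] using (stmt_11_general (hf.subset (subset_univ X) hXcv)
    (fun s ↦ (hg s).subset (subset_univ X) hXcv) δ hq hfeas hmin).csSup_eq.symm
end

section
/- Let G be a connected simple undirected graph on the finite vertex set {1,…,N} with neighbor sets N_i, let S be a nonempty finite index set, M > 0, and for each i let X_i ⊆ ℝ^{n_i} be nonempty, compact and convex, f_i : ℝ^{n_i} → ℝ be convex, g_i : ℝ^{n_i} → ℝ^S have every component convex, and define q_i(μ) := inf_{x ∈ X_i} ( f_i(x) + ⟨μ, g_i(x)⟩ ). For λ : {1,…,N} × {1,…,N} → ℝ^S define η(λ) := ∑_{i=1}^N sup_{μ ∈ Δ_M} ( q_i(μ) + ⟨μ, ∑_{j ∈ N_i} ( λ(i,j) − λ(j,i) )⟩ ). Then the infimum of η over all such λ is attained at some λ*, and inf_λ η(λ) = sup{ ∑_{i=1}^N q_i(μ) : μ ∈ Δ_M }. -/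
/-!
Summed over the graph, the price terms of `η` vanish at a common multiplier, because a divergence
has total zero; this is weak duality. For the converse, separate the concave function
`m ↦ ∑ i, q i (m i)`, in which every vertex has its own multiplier, from its upper bound `c` on the
diagonal of `Δ_M`. The separating functional gives one price vector per vertex. Charging the sum of
these prices to a single root vertex makes them balanced, and on a connected graph every balanced
family of vectors is the divergence of a flow, obtained by routing each vector to the root along a
path. That flow is `λ*`.
-/

open Set

section Graph

variable {V A : Type*} [AddCommGroup A] (G : SimpleGraph V) [G.LocallyFinite]

/-- The divergence of an edge flow `lam` on `G`: the net flow out of each vertex. The values of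
`lam` at pairs of non-adjacent vertices are ignored, and `lam` need not be antisymmetric. -/
def divergence : (V → V → A) →+ (V → A) where
  toFun lam i := ∑ j ∈ G.neighborFinset i, (lam i j - lam j i)
  map_zero' := by ext; simp
  map_add' lam lam' := by
    ext i
    simp only [Pi.add_apply, add_sub_add_comm, Finset.sum_add_distrib]

theorem divergence_apply (lam : V → V → A) (i : V) :
    divergence G lam i = ∑ j ∈ G.neighborFinset i, (lam i j - lam j i) :=
  rfl

theorem sum_divergence [Fintype V] (lam : V → V → A) : ∑ i, divergence G lam i = 0 := by
  simp only [divergence_apply, Finset.sum_sub_distrib, sub_eq_zero]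
  exact Finset.sum_comm' (by simp [G.adj_comm])

variable {G}

theorem divergence_single_single [DecidableEq V] {a b : V} (hab : G.Adj a b) (x : A) :
    divergence G (Pi.single a (Pi.single b x)) = Pi.single a x - Pi.single b x := by
  ext i
  have hout : ∑ j ∈ G.neighborFinset i, (Pi.single a (Pi.single b x) : V → V → A) i j =
      (Pi.single a x : V → A) i := by
    rcases eq_or_ne i a with rfl | hi
    · simp [hab]
    · simp [hi]
  have hin : ∑ j ∈ G.neighborFinset i, (Pi.single a (Pi.single b x) : V → V → A) j i =
      (Pi.single b x : V → A) i := by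
    rcases eq_or_ne i b with rfl | hi
    · simp [Pi.single_apply, ite_apply, hab.symm]
    · simp [Pi.single_apply, ite_apply, hi]
  rw [divergence_apply, Finset.sum_sub_distrib, hout, hin, Pi.sub_apply]

theorem single_sub_single_mem_range_divergence [DecidableEq V] {a b : V} (hab : G.Reachable a b)
    (x : A) : Pi.single a x - Pi.single b x ∈ (divergence G : (V → V → A) →+ _).range := by
  rw [SimpleGraph.reachable_iff_reflTransGen] at hab
  induction hab with
  | refl => simp
  | tail _ hadj ih =>
    rw [← sub_add_sub_cancel]
    exact add_mem ih ⟨_, divergence_single_single hadj x⟩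

theorem mem_range_divergence_iff [Fintype V] (hG : G.Connected) {v : V → A} :
    v ∈ (divergence G).range ↔ ∑ i, v i = 0 := by
  classical
  refine ⟨fun ⟨lam, hlam⟩ => hlam ▸ sum_divergence G lam, fun hv => ?_⟩
  obtain ⟨r⟩ := hG.nonempty
  have hdecomp : v = ∑ a, (Pi.single a (v a) - Pi.single r (v a)) := by
    have hroot : ∑ a, (Pi.single r (v a) : V → A) = 0 := by
      simpa [hv] using (map_sum (AddMonoidHom.single (fun _ : V => A) r) v Finset.univ).symm
    rw [Finset.sum_sub_distrib, Finset.univ_sum_single, hroot, sub_zero]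
  rw [hdecomp]
  exact sum_mem fun a _ => single_sub_single_mem_range_divergence (hG.preconnected a r) (v a)

end Graph

section Convexity

variable {E : Type*} [AddCommGroup E] [Module ℝ E]

theorem concaveOn_sInf_image {α : Type*} {F : E → α → ℝ} {s : Set E} {X : Set α}
    (hX : X.Nonempty) (hF : ∀ x ∈ X, ConcaveOn ℝ s (F · x))
    (hbdd : ∀ μ ∈ s, BddBelow (F μ '' X)) : ConcaveOn ℝ s fun μ => sInf (F μ '' X) := by
  refine ⟨(hF _ hX.some_mem).1, fun μ hμ ν hν a b ha hb hab => le_csInf (hX.image _) ?_⟩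
  rintro _ ⟨x, hx, rfl⟩
  calc a • sInf (F μ '' X) + b • sInf (F ν '' X) ≤ a • F μ x + b • F ν x := by
        gcongr
        · exact csInf_le (hbdd μ hμ) (mem_image_of_mem _ hx)
        · exact csInf_le (hbdd ν hν) (mem_image_of_mem _ hx)
    _ ≤ F (a • μ + b • ν) x := (hF x hx).2 hμ hν ha hb hab

theorem concaveOn_sum_apply {V : Type*} [Fintype V] {q : V → E → ℝ}
    (hq : ∀ i, ConcaveOn ℝ univ (q i)) : ConcaveOn ℝ univ fun m : V → E => ∑ i, q i (m i) := by
  refine ⟨convex_univ, fun m _ m' _ a b ha hb hab => ?_⟩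
  simp only [Finset.smul_sum, ← Finset.sum_add_distrib]
  exact Finset.sum_le_sum fun i _ => (hq i).2 (mem_univ _) (mem_univ _) ha hb hab

variable [TopologicalSpace E] [IsTopologicalAddGroup E] [ContinuousSMul ℝ E]

theorem exists_affine_between_concave_convex {φ ψ : E → ℝ} {K : Set E}
    (hφ : ConcaveOn ℝ univ φ) (hφc : Continuous φ) (hψ : ConvexOn ℝ K ψ) (hK : K.Nonempty)
    (hle : ∀ x ∈ K, φ x ≤ ψ x) :
    ∃ (L : E →L[ℝ] ℝ) (b : ℝ), (∀ x, φ x ≤ L x + b) ∧ ∀ x ∈ K, L x + b ≤ ψ x := by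
  have hopen : IsOpen {p : E × ℝ | p.1 ∈ univ ∧ p.2 < φ p.1} := by
    simpa using isOpen_lt continuous_snd (hφc.comp continuous_fst)
  have hdisj : Disjoint {p : E × ℝ | p.1 ∈ univ ∧ p.2 < φ p.1} {p | p.1 ∈ K ∧ ψ p.1 ≤ p.2} :=
    disjoint_left.2 fun p hp hp' => (hp.2.trans_le (hle _ hp'.1)).not_ge hp'.2
  obtain ⟨H, u, hhyp, hepi⟩ :=
    geometric_hahn_banach_open hφ.convex_strict_hypograph hopen hψ.convex_epigraph hdisj
  have hH (x : E) (t : ℝ) : H (x, t) = H (x, 0) + t * H (0, 1) := by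
    rw [← smul_eq_mul, ← map_smul, ← map_add]
    simp
  have hslope : 0 < H (0, 1) := by
    obtain ⟨y, hy⟩ := hK
    have hbelow := hhyp (y, φ y - 1) ⟨mem_univ y, sub_one_lt _⟩
    have habove := hepi (y, ψ y) ⟨hy, le_rfl⟩
    rw [hH] at hbelow habove
    nlinarith [hle y hy]
  let L : E →L[ℝ] ℝ := -((H (0, 1))⁻¹ • H.comp (.inl ℝ E ℝ))
  have hL (x : E) : (u - H (x, 0)) / H (0, 1) = L x + (H (0, 1))⁻¹ * u := by
    simp only [L, neg_apply, smul_apply, ContinuousLinearMap.comp_apply,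
      ContinuousLinearMap.inl_apply, smul_eq_mul]
    ring
  refine ⟨L, (H (0, 1))⁻¹ * u, fun x => le_of_forall_lt fun t ht => ?_, fun x hx => ?_⟩
  · rw [← hL, lt_div_iff₀ hslope, lt_sub_iff_add_lt', ← hH]
    exact hhyp (x, t) ⟨mem_univ x, ht⟩
  · rw [← hL, div_le_iff₀ hslope, sub_le_iff_le_add', ← hH]
    exact hepi (x, ψ x) ⟨hx, le_rfl⟩

theorem exists_sum_eq_zero_sum_add_le {V : Type*} [Fintype V] [Nonempty V] {q : V → E → ℝ}
    (hq : ∀ i, ConcaveOn ℝ univ (q i)) (hqc : ∀ i, Continuous (q i)) {D : Set E}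
    (hD : Convex ℝ D) (hDne : D.Nonempty) {c : ℝ} (hc : ∀ μ ∈ D, ∑ i, q i μ ≤ c) :
    ∃ v : V → E →L[ℝ] ℝ, ∑ i, v i = 0 ∧
      ∀ m : V → E, (∀ i, m i ∈ D) → ∑ i, (q i (m i) + v i (m i)) ≤ c := by
  classical
  let diag : E →ₗ[ℝ] V → E := .pi fun _ => .id
  obtain ⟨L, b, hqL, hLc⟩ := exists_affine_between_concave_convex (K := diag '' D)
    (concaveOn_sum_apply hq) (by fun_prop) (convexOn_const c (hD.linear_image diag))
    (hDne.image diag) (by rintro _ ⟨μ, hμ, rfl⟩; exact hc μ hμ)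
  obtain ⟨r⟩ := ‹Nonempty V›
  let ℓ (i : V) : E →L[ℝ] ℝ := L.comp (.single ℝ (fun _ => E) i)
  have hℓ (m : V → E) : ∑ i, ℓ i (m i) = L m :=
    ContinuousLinearMap.sum_comp_single ℝ (fun _ => E) L m
  refine ⟨(Pi.single r (∑ k, ℓ k) : V → E →L[ℝ] ℝ) - ℓ, by simp, fun m hm => ?_⟩
  have hroot : ∑ i, (Pi.single r (∑ k, ℓ k) : V → E →L[ℝ] ℝ) i (m i) = L (diag (m r)) := by
    rw [Finset.sum_eq_single r (fun i _ hi => by simp [hi]) (by simp), Pi.single_eq_same,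
      sum_apply]
    exact hℓ (diag (m r))
  have hdiag := hLc _ (mem_image_of_mem diag (hm r))
  simp only [Pi.sub_apply, sub_apply, Finset.sum_add_distrib, Finset.sum_sub_distrib, hroot, hℓ]
  linarith [hqL m]

end Convexity

section Duality

variable {S : Type*} [Fintype S]

/-- The set `Δ_M` of nonnegative vectors with total mass at most `M`. -/
def subSimplex (S : Type*) [Fintype S] (M : ℝ) : Set (S → ℝ) :=
  {μ | (∀ s, 0 ≤ μ s) ∧ ∑ s, μ s ≤ M}

theorem convex_subSimplex (M : ℝ) : Convex ℝ (subSimplex S M) := by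
  have hmass : IsLinearMap ℝ fun μ : S → ℝ => ∑ s, μ s :=
    ⟨fun _ _ => Finset.sum_add_distrib, fun _ _ => (Finset.mul_sum ..).symm⟩
  exact (convex_Ici (0 : S → ℝ)).inter (convex_halfSpace_le hmass M)

theorem isCompact_subSimplex (M : ℝ) : IsCompact (subSimplex S M) := by
  have hclosed : IsClosed (subSimplex S M) :=
    (isClosed_Ici (a := (0 : S → ℝ))).inter <|
      isClosed_le (f := fun μ : S → ℝ => ∑ s, μ s) (by fun_prop) continuous_const
  refine (isCompact_Icc (a := 0) (b := fun _ => M)).of_isClosed_subset hclosed ?_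
  rintro μ ⟨hnonneg, hmass⟩
  exact ⟨hnonneg, fun s =>
    (Finset.single_le_sum (fun s _ => hnonneg s) (Finset.mem_univ s)).trans hmass⟩

/-- The dual function of minimising `f` over `X` subject to `g ≤ 0`, at the multiplier `μ`. As an
infimum in `ℝ` it is meaningful only where the Lagrangian is bounded below on `X`. -/
noncomputable def lagrangeDual {α : Type*} (X : Set α) (f : α → ℝ) (g : α → S → ℝ)
    (μ : S → ℝ) : ℝ :=
  sInf ((fun x => f x + μ ⬝ᵥ g x) '' X)

theorem bddBelow_lagrangian_image {E : Type*} [NormedAddCommGroup E] [NormedSpace ℝ E]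
    [FiniteDimensional ℝ E] {X : Set E} (hX : IsCompact X) {f : E → ℝ} (hf : ConvexOn ℝ univ f)
    {g : E → S → ℝ} (hg : ∀ s, ConvexOn ℝ univ fun x => g x s) (μ : S → ℝ) :
    BddBelow ((fun x => f x + μ ⬝ᵥ g x) '' X) := by
  have hfc : Continuous f := hf.locallyLipschitz.continuous
  have hgc : Continuous g := continuous_pi fun s => (hg s).locallyLipschitz.continuous
  exact hX.bddBelow_image (hfc.add (continuous_const.dotProduct hgc)).continuousOn

theorem concaveOn_lagrangeDual {α : Type*} {X : Set α} (hX : X.Nonempty) {f : α → ℝ}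
    {g : α → S → ℝ} (hbdd : ∀ μ, BddBelow ((fun x => f x + μ ⬝ᵥ g x) '' X)) :
    ConcaveOn ℝ univ (lagrangeDual X f g) :=
  concaveOn_sInf_image (F := fun μ x => f x + μ ⬝ᵥ g x) hX
    (fun x _ => (concaveOn_const (f x) convex_univ).add
      (((dotProductBilin ℝ ℝ).flip (g x)).concaveOn convex_univ))
    fun μ _ => hbdd μ

variable {V : Type*} [Fintype V] {G : SimpleGraph V} [G.LocallyFinite]
  {D : Set (S → ℝ)} {q : V → (S → ℝ) → ℝ}

/-- The second dual function `η`: each vertex `i` maximises `q i` over `D` on its own copy of the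
multiplier, and `lam` prices the disagreement between copies at neighbouring vertices. -/
noncomputable def consensusDual (G : SimpleGraph V) [G.LocallyFinite] (D : Set (S → ℝ))
    (q : V → (S → ℝ) → ℝ) (lam : V → V → S → ℝ) : ℝ :=
  ∑ i, sSup ((fun μ => q i μ + μ ⬝ᵥ divergence G lam i) '' D)

theorem sum_le_consensusDual (hD : IsCompact D) (hq : ∀ i, ContinuousOn (q i) D)
    (lam : V → V → S → ℝ) {μ : S → ℝ} (hμ : μ ∈ D) : ∑ i, q i μ ≤ consensusDual G D q lam :=
  calc ∑ i, q i μ = ∑ i, (q i μ + μ ⬝ᵥ divergence G lam i) := by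
        rw [Finset.sum_add_distrib, ← dotProduct_sum, sum_divergence, dotProduct_zero, add_zero]
    _ ≤ consensusDual G D q lam := Finset.sum_le_sum fun i _ =>
        le_csSup (hD.bddAbove_image ((hq i).add (by fun_prop))) (mem_image_of_mem _ hμ)

theorem exists_consensusDual_le (hG : G.Connected) (hD : IsCompact D) (hDconv : Convex ℝ D)
    (hDne : D.Nonempty) (hq : ∀ i, ConcaveOn ℝ univ (q i)) {c : ℝ}
    (hc : ∀ μ ∈ D, ∑ i, q i μ ≤ c) : ∃ lam, consensusDual G D q lam ≤ c := by
  classical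
  have := hG.nonempty
  have hqc (i : V) : Continuous (q i) := (hq i).locallyLipschitz.continuous
  obtain ⟨v, hv, hvc⟩ := exists_sum_eq_zero_sum_add_le hq hqc hDconv hDne hc
  let w (i : V) : S → ℝ :=
    ((dotProductEquiv ℝ S).symm.toLinearMap ∘ₗ ContinuousLinearMap.coeLM ℝ) (v i)
  have hw (i : V) (μ : S → ℝ) : μ ⬝ᵥ w i = v i μ := by
    rw [dotProduct_comm]
    exact LinearMap.congr_fun ((dotProductEquiv ℝ S).apply_symm_apply (v i)) μ
  have hwsum : ∑ i, w i = 0 := by rw [← map_sum, hv, map_zero]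
  obtain ⟨lam, hlam⟩ := (mem_range_divergence_iff hG).2 hwsum
  choose m hmD hmax using fun i => hD.exists_sSup_image_eq hDne
    (f := fun μ => q i μ + μ ⬝ᵥ divergence G lam i) (by fun_prop)
  refine ⟨lam, ?_⟩
  calc consensusDual G D q lam = ∑ i, (q i (m i) + v i (m i)) :=
        Finset.sum_congr rfl fun i _ => by rw [hmax, hlam, hw]
    _ ≤ c := hvc m hmD

theorem exists_consensusDual_eq_sSup (hG : G.Connected) (hD : IsCompact D)
    (hDconv : Convex ℝ D) (hDne : D.Nonempty) (hq : ∀ i, ConcaveOn ℝ univ (q i)) :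
    ∃ lam, (∀ lam', consensusDual G D q lam ≤ consensusDual G D q lam') ∧
      consensusDual G D q lam = sSup ((fun μ => ∑ i, q i μ) '' D) := by
  have hqc (i : V) : Continuous (q i) := (hq i).locallyLipschitz.continuous
  have hweak (lam : V → V → S → ℝ) :
      sSup ((fun μ => ∑ i, q i μ) '' D) ≤ consensusDual G D q lam :=
    csSup_le (hDne.image _) <| forall_mem_image.2 fun _ hμ =>
      sum_le_consensusDual hD (fun i => (hqc i).continuousOn) lam hμ
  obtain ⟨lam, hlam⟩ := exists_consensusDual_le hG hD hDconv hDne hq fun μ hμ =>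
    le_csSup (hD.bddAbove_image (by fun_prop)) (mem_image_of_mem (fun μ => ∑ i, q i μ) hμ)
  exact ⟨lam, fun lam' => hlam.trans (hweak lam'), hlam.antisymm (hweak lam)⟩

theorem stmt_17_general (hG : G.Connected) {M : ℝ} (hM : 0 ≤ M) {E : V → Type*}
    (X : ∀ i, Set (E i)) (hXne : ∀ i, (X i).Nonempty) (f : ∀ i, E i → ℝ) (g : ∀ i, E i → S → ℝ)
    (hbdd : ∀ i μ, BddBelow ((fun x => f i x + μ ⬝ᵥ g i x) '' X i))
    (hq : ∀ i (μ : S → ℝ), q i μ = sInf {y | ∃ x ∈ X i, f i x + ∑ s, μ s * g i x s = y})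
    (η : (V → V → S → ℝ) → ℝ)
    (hη : ∀ lam : V → V → S → ℝ,
      η lam = ∑ i, sSup {y | ∃ μ : S → ℝ, ((∀ s, 0 ≤ μ s) ∧ ∑ s, μ s ≤ M) ∧
        q i μ + ∑ s, μ s * (∑ j ∈ G.neighborFinset i, (lam i j s - lam j i s)) = y}) :
    ∃ lamstar : V → V → S → ℝ, (∀ lam : V → V → S → ℝ, η lamstar ≤ η lam) ∧
      η lamstar = sSup {y | ∃ μ : S → ℝ, ((∀ s, 0 ≤ μ s) ∧ ∑ s, μ s ≤ M) ∧ ∑ i, q i μ = y} := by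
  have hqconc (i : V) : ConcaveOn ℝ univ (q i) :=
    (funext (hq i) : q i = lagrangeDual (X i) (f i) (g i)) ▸
      concaveOn_lagrangeDual (hXne i) (hbdd i)
  have hηdual : η = consensusDual G (subSimplex S M) q := by
    funext lam
    simp only [hη, consensusDual, dotProduct, divergence_apply, Finset.sum_apply, Pi.sub_apply]
    rfl
  rw [hηdual]
  exact exists_consensusDual_eq_sSup hG (isCompact_subSimplex M) (convex_subSimplex M)
    ⟨0, fun _ => le_rfl, by simpa using hM⟩ hqconc

end Duality

/-- Lemma 4 of the paper.
The second dual function `η(λ) = ∑_i sup_{μ ∈ Δ_M} (q_i μ + ⟨μ, ∑_{j∈N_i}(λ_{ij} − λ_{ji})⟩)`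
attains its infimum at some `λ*`, and the optimal value equals the optimal value
of the restricted dual problem `sup {∑_i q_i μ : μ ∈ Δ_M}`. -/
theorem stmt_17 {N : ℕ} {S : Type} [Fintype S] [Nonempty S]
    (G : SimpleGraph (Fin N)) [DecidableRel G.Adj] (hG : G.Connected)
    (M : ℝ) (hM : 0 < M) (n : Fin N → ℕ)
    (X : ∀ i, Set (Fin (n i) → ℝ))
    (hXne : ∀ i, (X i).Nonempty) (hXcp : ∀ i, IsCompact (X i)) (hXcv : ∀ i, Convex ℝ (X i))
    (f : ∀ i, (Fin (n i) → ℝ) → ℝ) (hf : ∀ i, ConvexOn ℝ Set.univ (f i))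
    (g : ∀ i, (Fin (n i) → ℝ) → (S → ℝ))
    (hg : ∀ i s, ConvexOn ℝ Set.univ (fun x => g i x s))
    (q : Fin N → (S → ℝ) → ℝ)
    (hq : ∀ i (μ : S → ℝ), q i μ = sInf {y | ∃ x ∈ X i, f i x + ∑ s, μ s * g i x s = y})
    (η : (Fin N → Fin N → (S → ℝ)) → ℝ)
    (hη : ∀ lam : Fin N → Fin N → (S → ℝ),
      η lam = ∑ i, sSup {y | ∃ μ : S → ℝ, ((∀ s, 0 ≤ μ s) ∧ ∑ s, μ s ≤ M) ∧
        q i μ + ∑ s, μ s * (∑ j ∈ G.neighborFinset i, (lam i j s - lam j i s)) = y}) :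
    ∃ lamstar : Fin N → Fin N → (S → ℝ),
      (∀ lam : Fin N → Fin N → (S → ℝ), η lamstar ≤ η lam)
      ∧ η lamstar
          = sSup {y | ∃ μ : S → ℝ, ((∀ s, 0 ≤ μ s) ∧ ∑ s, μ s ≤ M) ∧ ∑ i, q i μ = y} :=
  stmt_17_general hG hM.le X hXne f g
    (fun i => bddBelow_lagrangian_image (hXcp i) (hf i) (hg i)) hq η hη
end

section
/- Consider N ≥ 1 agents on a connected simple undirected graph G with neighbor sets N_i, a nonempty finite index set S, and for each i a nonempty compact convex set X_i ⊆ ℝ^{n_i}, a convex function f_i : ℝ^{n_i} → ℝ and a map g_i : ℝ^{n_i} → ℝ^S with every component convex. Assume: (a) there exist x̄_i ∈ X_i with ∑_i g_i(x̄_i) ≺ 0 componentwise (Slater condition), and let f* := inf{ ∑_i f_i(x_i) : x_i ∈ X_i, ∑_i g_i(x_i) ⪯ 0 }; (b) there exists μ* ∈ ℝ^S with μ* ⪰ 0 and inf{ ∑_i ( f_i(x_i) + ⟨μ*, g_i(x_i)⟩ ) : x_i ∈ X_i for all i } = f*, and M > ∑_s μ*_s; (c) step sizes γ^t ≥ 0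 satisfy ∑_{t=0}^∞ γ^t = ∞ and ∑_{t=0}^∞ (γ^t)² < ∞. Suppose sequences λ^t : {1,…,N} × {1,…,N} → ℝ^S (with arbitrary λ^0), x_i^{t+1} ∈ ℝ^{n_i}, ρ_i^{t+1} ∈ ℝ and μ_i^{t+1} ∈ Δ_M satisfy for every t and every i, with δ_i^t := ∑_{j ∈ N_i} ( λ^t(i,j) − λ^t(j,i) ): (1) (x_i^{t+1}, ρ_i^{t+1}) minimizes (x,ρ) ↦ f_i(x) + M ρ over { x ∈ X_i, ρ ≥ 0, g_i(x) + δ_i^t ⪯ ρ·𝟏 }; (2) μ_i^{t+1} maximizes μ ↦ q_i(μ) + ⟨μ, δ_i^t⟩ over Δ_M, where q_i(μ) := inf_{x ∈ X_i} ( f_i(x) + ⟨μ, g_i(x)⟩ ); (3) λ^{t+1}(i,j) = λ^t(i,j) − γ^t ( μ_i^{t+1} − μ_j^{t+1} ) for all adjacent pairs (i,j), and λ^{t+1}(i,j) = λ^t(i,j) otherwise. Then every cluster point (x̄_1,…,x̄_N) of the sequence (x_1^t,…,x_N^t) is an optimal solution of the original problem: x̄_i ∈ X_i for all i, ∑_i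 g_i(x̄_i) ⪯ 0, and ∑_i f_i(x̄_i) = f*. -/
/-!
Strong duality identifies the local penalized minimum with the maximum of the local dual objective.
Since the shifts `δ_i` sum to zero, the sum `D t` of these maxima is at least `f*`. As the coupling
graph is connected, an optimal decision can be made locally feasible by some edge variables `l*`,
and weak duality then bounds `D t - f*` by the inner product of `λ^t - l*` with the update
direction. The squared distance from `λ^t` to `l*` is therefore a Lyapunov function, which yields
`∑ γ^t (D t - f*) < ∞`. As `D` increases by at most a multiple of `γ^t` per step, `D t → f*`.
Finally, since `M` exceeds `∑_s μ*_s`, the gap `D t - f*` controls the total violation `∑_i ρ_i`.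
-/

open Filter Topology

section RealSequences

theorem summable_of_add_le_add {W b e : ℕ → ℝ} (hW : ∀ t, 0 ≤ W t) (hb : ∀ t, 0 ≤ b t)
    (he : Summable e) (hstep : ∀ t, W (t + 1) + b t ≤ W t + e t) : Summable b := by
  obtain ⟨B, hB⟩ := he.hasSum.tendsto_sum_nat.bddAbove_range
  refine summable_of_sum_range_le (c := W 0 + B) hb fun n => ?_
  have telescoped :
      W n + ∑ t ∈ Finset.range n, b t ≤ W 0 + ∑ t ∈ Finset.range n, e t := by
    induction n with
    | zero => simp
    | succ n ih =>
      rw [Finset.sum_range_succ, Finset.sum_range_succ]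
      linarith [hstep n]
  linarith [hW n, hB ⟨n, rfl⟩]

theorem exists_tendsto_of_le_add_summable {b e : ℕ → ℝ} (hb : BddBelow (Set.range b))
    (he : Summable e) (hstep : ∀ᶠ t in atTop, b (t + 1) ≤ b t + e t) :
    ∃ L, Tendsto b atTop (𝓝 L) := by
  obtain ⟨T, hT⟩ := eventually_atTop.1 hstep
  obtain ⟨m, hm⟩ := hb
  have hsum := he.hasSum.tendsto_sum_nat
  obtain ⟨B, hB⟩ := hsum.bddAbove_range
  let c : ℕ → ℝ := fun t => b t - ∑ k ∈ Finset.range t, e k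
  have c_antitone : Antitone fun t => c (t + T) := antitone_nat_of_succ_le fun t => by
    have := hT (t + T) (Nat.le_add_left T t)
    simp only [c, add_right_comm t 1 T, Finset.sum_range_succ]
    linarith
  have c_bddBelow : BddBelow (Set.range fun t => c (t + T)) := by
    refine ⟨m - B, ?_⟩
    rintro _ ⟨t, rfl⟩
    exact sub_le_sub (hm ⟨t + T, rfl⟩) (hB ⟨t + T, rfl⟩)
  have c_tendsto := (tendsto_add_atTop_iff_nat T).1 (tendsto_atTop_ciInf c_antitone c_bddBelow)
  exact ⟨_, (c_tendsto.add hsum).congr fun t => sub_add_cancel _ _⟩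

theorem frequently_lt_of_summable_mul {γ a : ℕ → ℝ} (hγ : ∀ t, 0 ≤ γ t) (hγ_div : ¬ Summable γ)
    (hγa : Summable fun t => γ t * a t) {ε : ℝ} (hε : 0 < ε) : ∃ᶠ t in atTop, a t < ε := by
  contrapose! hγ_div
  refine (hγa.div_const ε).of_norm_bounded_eventually_nat ?_
  filter_upwards [hγ_div] with t ht
  rw [Real.norm_of_nonneg (hγ t), le_div_iff₀ hε]
  exact mul_le_mul_of_nonneg_left ht (hγ t)

theorem tendsto_zero_of_summable_sq {γ : ℕ → ℝ} (hγ : Summable fun t => γ t ^ 2) :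
    Tendsto γ atTop (𝓝 0) := by
  simpa only [Function.comp_def, Real.sqrt_sq_eq_abs, Real.sqrt_zero,
    tendsto_zero_iff_abs_tendsto_zero γ] using
    (Real.continuous_sqrt.tendsto 0).comp hγ.tendsto_atTop_zero

theorem tendsto_max_sub_zero_of_summable_mul {γ a : ℕ → ℝ} {C ε : ℝ} (hC : 0 ≤ C)
    (hγ : ∀ t, 0 ≤ γ t) (hγ_zero : Tendsto γ atTop (𝓝 0)) (hγ_div : ¬ Summable γ)
    (hγa : Summable fun t => γ t * a t) (ha : ∀ t, 0 ≤ a t)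
    (hstep : ∀ t, a (t + 1) ≤ a t + C * γ t) (hε : 0 < ε) :
    Tendsto (fun t => max (a t - 2 * ε) 0) atTop (𝓝 0) := by
  have drift_small : ∀ᶠ t in atTop, C * γ t < ε := by
    have := hγ_zero.const_mul C
    rw [mul_zero] at this
    exact this.eventually_lt_const hε
  -- The excess grows only while `ε ≤ a t`, where `γ t * a t` absorbs the increment.
  have excess_step : ∀ᶠ t in atTop,
      max (a (t + 1) - 2 * ε) 0 ≤ max (a t - 2 * ε) 0 + C / ε * (γ t * a t) := by
    filter_upwards [drift_small] with t ht
    have increment_nonneg : 0 ≤ C / ε * (γ t * a t) :=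
      mul_nonneg (div_nonneg hC hε.le) (mul_nonneg (hγ t) (ha t))
    refine max_le ?_ (add_nonneg (le_max_right _ _) increment_nonneg)
    rcases le_total (a t) ε with hle | hge
    · linarith [hstep t, le_max_right (a t - 2 * ε) 0]
    · have : C * γ t ≤ C / ε * (γ t * a t) := calc
        C * γ t = C / ε * (γ t * ε) := by field_simp
        _ ≤ C / ε * (γ t * a t) := by gcongr; exact hγ t
      linarith [hstep t, le_max_left (a t - 2 * ε) 0]
  have excess_bddBelow : BddBelow (Set.range fun t => max (a t - 2 * ε) 0) :=
    ⟨0, Set.forall_mem_range.2 fun _ => le_max_right _ _⟩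
  obtain ⟨L, hL⟩ := exists_tendsto_of_le_add_summable excess_bddBelow
    (hγa.mul_left (C / ε)) excess_step
  have frequently_zero : ∃ᶠ t in atTop, max (a t - 2 * ε) 0 ∈ ({0} : Set ℝ) :=
    (frequently_lt_of_summable_mul hγ hγ_div hγa hε).mono fun t ht =>
      max_eq_right (by linarith)
  have L_eq : L = 0 := isClosed_singleton.mem_of_frequently_of_tendsto frequently_zero hL
  rwa [L_eq] at hL

theorem tendsto_zero_of_summable_mul {γ a : ℕ → ℝ} {C : ℝ} (hC : 0 ≤ C)
    (hγ : ∀ t, 0 ≤ γ t) (hγ_zero : Tendsto γ atTop (𝓝 0)) (hγ_div : ¬ Summable γ)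
    (hγa : Summable fun t => γ t * a t) (ha : ∀ t, 0 ≤ a t)
    (hstep : ∀ t, a (t + 1) ≤ a t + C * γ t) : Tendsto a atTop (𝓝 0) := by
  refine tendsto_order.2 ⟨fun c hc => .of_forall fun t => hc.trans_le (ha t), fun c hc => ?_⟩
  have hc' : 0 < c / 3 := by positivity
  have excess := tendsto_max_sub_zero_of_summable_mul hC hγ hγ_zero hγ_div hγa ha hstep hc'
  filter_upwards [excess.eventually_lt_const hc'] with t ht
  linarith [le_max_left (a t - 2 * (c / 3)) 0]

theorem tendsto_of_penalty_gap {ι : Type*} {l : Filter ι} {F R D : ι → ℝ} {v m M : ℝ}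
    (hmM : m < M) (hR : ∀ t, 0 ≤ R t) (hlower : ∀ t, v - m * R t ≤ F t)
    (hupper : ∀ t, F t + M * R t ≤ D t) (hD : Tendsto D l (𝓝 v)) :
    Tendsto R l (𝓝 0) ∧ Tendsto F l (𝓝 v) := by
  have R_le (t : ι) : R t ≤ (D t - v) / (M - m) := by
    rw [le_div_iff₀ (sub_pos.2 hmM)]
    linarith [hlower t, hupper t]
  have R_tendsto : Tendsto R l (𝓝 0) := by
    refine squeeze_zero hR R_le ?_
    simpa using (hD.sub_const v).div_const (M - m)
  refine ⟨R_tendsto, tendsto_of_tendsto_of_tendsto_of_le_of_le (?_ : Tendsto _ l (𝓝 v)) ?_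
    hlower fun t => le_sub_iff_add_le.2 (hupper t)⟩
  · simpa using (R_tendsto.const_mul m).const_sub v
  · simpa using hD.sub (R_tendsto.const_mul M)

end RealSequences

section NetFlow

variable {V : Type*} [Fintype V] (G : SimpleGraph V) [DecidableRel G.Adj]

/-- The net outflow `∑_{j ∈ N_i} (l(i, j) - l(j, i))` at each vertex `i` of the edge variables `l`.
Values of `l` at nonadjacent pairs are ignored, and `l` need not be antisymmetric. -/
def netFlow : (V → V → ℝ) →ₗ[ℝ] V → ℝ where
  toFun l i := ∑ j ∈ G.neighborFinset i, (l i j - l j i)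
  map_add' l l' := funext fun i => by
    simp only [Pi.add_apply, ← Finset.sum_add_distrib, add_sub_add_comm]
  map_smul' c l := funext fun i => by
    simp only [Pi.smul_apply, smul_eq_mul, RingHom.id_apply, Finset.mul_sum, mul_sub]

theorem netFlow_apply (l : V → V → ℝ) (i : V) :
    netFlow G l i = ∑ j ∈ G.neighborFinset i, (l i j - l j i) := rfl

theorem sum_neighborFinset_comm {R : Type*} [AddCommMonoid R] (a : V → V → R) :
    ∑ i, ∑ j ∈ G.neighborFinset i, a i j = ∑ i, ∑ j ∈ G.neighborFinset i, a j i :=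
  Finset.sum_comm' fun i j => by simp [G.adj_comm]

theorem sum_mul_netFlow (a : V → V → ℝ) (m : V → ℝ) :
    ∑ i, m i * netFlow G a i = ∑ i, ∑ j ∈ G.neighborFinset i, a i j * (m i - m j) := by
  simp only [netFlow_apply, Finset.mul_sum, mul_sub, Finset.sum_sub_distrib]
  rw [sum_neighborFinset_comm G fun i j => m i * a j i]
  simp only [mul_comm]

theorem sum_netFlow (l : V → V → ℝ) : ∑ i, netFlow G l i = 0 := by
  simpa using sum_mul_netFlow G l 1

theorem netFlow_single_single [DecidableEq V] {u v : V} (huv : G.Adj u v) (c : ℝ) :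
    netFlow G (Pi.single u (Pi.single v c)) = Pi.single u c - Pi.single v c := by
  have edge_apply (i j : V) :
      (Pi.single u (Pi.single v c) : V → V → ℝ) i j = if i = u ∧ j = v then c else 0 := by
    by_cases hi : i = u <;> simp [hi, Pi.single_apply]
  ext i
  simp only [netFlow_apply, edge_apply, Finset.sum_sub_distrib, Pi.sub_apply, Pi.single_apply]
  congr 1
  · by_cases hi : i = u <;> simp [hi, huv]
  · by_cases hi : i = v <;> simp [hi, huv.symm]

variable {G}

theorem exists_netFlow_eq (hG : G.Connected) {d : V → ℝ} (hd : ∑ i, d i = 0) :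
    ∃ l, netFlow G l = d := by
  classical
  have single_sub_single_mem (c : ℝ) {u v : V} (p : G.Walk u v) :
      Pi.single u c - Pi.single v c ∈ LinearMap.range (netFlow G) := by
    induction p with
    | nil => simp
    | cons huv _ ih =>
      simpa using add_mem (LinearMap.mem_range.2 ⟨_, netFlow_single_single G huv c⟩) ih
  obtain ⟨root⟩ := hG.nonempty
  have d_eq : d = ∑ i, (Pi.single i (d i) - Pi.single root (d i)) := by
    have sum_root : ∑ i, (Pi.single root (d i) : V → ℝ) = 0 :=
      (map_sum (AddMonoidHom.single (fun _ : V => ℝ) root) d _).symm.trans (by rw [hd, map_zero])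
    rw [Finset.sum_sub_distrib, Finset.univ_sum_single, sum_root, sub_zero]
  rw [← LinearMap.mem_range, d_eq]
  exact sum_mem fun i _ => single_sub_single_mem _ (hG.preconnected i root).some

theorem exists_add_netFlow_nonpos (hG : G.Connected) {b : V → ℝ} (hb : ∑ i, b i ≤ 0) :
    ∃ l, ∀ i, b i + netFlow G l i ≤ 0 := by
  have := hG.nonempty
  let average := (∑ i, b i) / Fintype.card V
  obtain ⟨l, hl⟩ := exists_netFlow_eq hG (d := fun i => average - b i) (by
    simp [average, mul_div_cancel₀])
  refine ⟨l, fun i => ?_⟩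
  rw [hl, add_sub_cancel]
  exact div_nonpos_of_nonpos_of_nonneg hb (Nat.cast_nonneg _)

variable (G)

/-- The sum of `a(i, j) ^ 2` over all ordered pairs of adjacent vertices; with `a` the difference of
the current and an optimal flow, this is the Lyapunov function of the subgradient method. -/
def flowEnergy (a : V → V → ℝ) : ℝ := ∑ i, ∑ j ∈ G.neighborFinset i, a i j ^ 2

theorem flowEnergy_nonneg (a : V → V → ℝ) : 0 ≤ flowEnergy G a :=
  Finset.sum_nonneg fun _ _ => Finset.sum_nonneg fun _ _ => sq_nonneg _

variable {G}

theorem flowEnergy_eq_of_step {a a' : V → V → ℝ} {m : V → ℝ} {γ : ℝ}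
    (hstep : ∀ i j, G.Adj i j → a' i j = a i j - γ * (m i - m j)) :
    flowEnergy G a' = flowEnergy G a - 2 * γ * ∑ i, m i * netFlow G a i +
      γ ^ 2 * flowEnergy G fun i j => m i - m j := by
  rw [sum_mul_netFlow]
  simp only [flowEnergy, Finset.mul_sum, ← Finset.sum_sub_distrib, ← Finset.sum_add_distrib]
  refine Finset.sum_congr rfl fun i _ => Finset.sum_congr rfl fun j hj => ?_
  rw [hstep i j ((G.mem_neighborFinset i j).1 hj)]
  ring

theorem flowEnergy_le_of_abs_le {a : V → V → ℝ} {B : ℝ} (ha : ∀ i j, |a i j| ≤ B) :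
    flowEnergy G a ≤ (∑ i, G.degree i) * B ^ 2 := by
  have vertex_bound (i : V) : ∑ j ∈ G.neighborFinset i, a i j ^ 2 ≤ G.degree i * B ^ 2 := by
    rw [← nsmul_eq_mul]
    exact Finset.sum_le_card_nsmul _ _ _ fun j _ => sq_le_sq' (neg_le_of_abs_le (ha i j))
      (le_of_abs_le (ha i j))
  push_cast
  rw [Finset.sum_mul]
  exact Finset.sum_le_sum fun i _ => vertex_bound i

theorem netFlow_le_of_step {a a' : V → V → ℝ} {m : V → ℝ} {γ B : ℝ} (hγ : 0 ≤ γ)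
    (hm : ∀ i j, |m i - m j| ≤ B)
    (hstep : ∀ i j, G.Adj i j → a' i j = a i j - γ * (m i - m j)) (i : V) :
    netFlow G a' i ≤ netFlow G a i + G.degree i * (2 * γ * B) := by
  rw [netFlow_apply, netFlow_apply, ← nsmul_eq_mul, ← SimpleGraph.card_neighborFinset_eq_degree,
    ← Finset.sum_const, ← Finset.sum_add_distrib]
  refine Finset.sum_le_sum fun j hj => ?_
  have hij := (G.mem_neighborFinset i j).1 hj
  rw [hstep i j hij, hstep j i hij.symm]
  linarith [mul_le_mul_of_nonneg_left (abs_le.1 (hm j i)).2 hγ]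

end NetFlow

section CappedOrthant

variable {S : Type*} [Fintype S] {M : ℝ}

/-- The truncated orthant `Δ_M = {ν ⪰ 0 : ∑ ν_s ≤ M}` in which the local multipliers live. -/
def cappedOrthant (S : Type*) [Fintype S] (M : ℝ) : Set (S → ℝ) :=
  {ν | (∀ s, 0 ≤ ν s) ∧ ∑ s, ν s ≤ M}

theorem convex_cappedOrthant : Convex ℝ (cappedOrthant S M) := by
  intro ν hν ν' hν' a b ha hb hab
  refine ⟨fun s => add_nonneg (mul_nonneg ha (hν.1 s)) (mul_nonneg hb (hν'.1 s)), ?_⟩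
  simpa only [Pi.add_apply, Pi.smul_apply, Finset.sum_add_distrib, Finset.smul_sum,
    Set.mem_Iic] using convex_Iic M hν.2 hν'.2 ha hb hab

theorem le_of_mem_cappedOrthant {ν : S → ℝ} (hν : ν ∈ cappedOrthant S M) (s : S) : ν s ≤ M :=
  (Finset.single_le_sum (fun k _ => hν.1 k) (Finset.mem_univ s)).trans hν.2

theorem abs_sub_le_of_mem_cappedOrthant {ν ν' : S → ℝ} (hν : ν ∈ cappedOrthant S M)
    (hν' : ν' ∈ cappedOrthant S M) (s : S) : |ν s - ν' s| ≤ M :=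
  abs_sub_le_of_nonneg_of_le (hν.1 s) (le_of_mem_cappedOrthant hν s) (hν'.1 s)
    (le_of_mem_cappedOrthant hν' s)

theorem isCompact_cappedOrthant : IsCompact (cappedOrthant S M) := by
  have subset_Icc : cappedOrthant S M ⊆ Set.Icc 0 fun _ => M := fun ν hν =>
    ⟨hν.1, le_of_mem_cappedOrthant hν⟩
  refine isCompact_Icc.of_isClosed_subset ?_ subset_Icc
  have sum_continuous : Continuous fun ν : S → ℝ => ∑ s, ν s := by fun_prop
  exact isClosed_Ici.inter (isClosed_le sum_continuous continuous_const)

theorem zero_mem_cappedOrthant (hM : 0 ≤ M) : 0 ∈ cappedOrthant S M :=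
  ⟨fun _ => le_rfl, by simpa using hM⟩

theorem single_mem_cappedOrthant [DecidableEq S] (hM : 0 ≤ M) (s : S) :
    Pi.single s M ∈ cappedOrthant S M :=
  ⟨fun k => by by_cases hk : k = s <;> simp [hk, hM], by simp⟩

theorem sum_mul_le_of_mem_cappedOrthant {ν u : S → ℝ} {r : ℝ} (hν : ν ∈ cappedOrthant S M)
    (hr : 0 ≤ r) (hu : ∀ s, u s ≤ r) : ∑ s, ν s * u s ≤ M * r := calc
  ∑ s, ν s * u s ≤ ∑ s, ν s * r :=
    Finset.sum_le_sum fun s _ => mul_le_mul_of_nonneg_left (hu s) (hν.1 s)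
  _ = (∑ s, ν s) * r := (Finset.sum_mul ..).symm
  _ ≤ M * r := mul_le_mul_of_nonneg_right hν.2 hr

theorem exists_sum_mul_eq_mul_of_forall_le (hM : 0 ≤ M) (u : S → ℝ) :
    ∃ r, 0 ≤ r ∧ (∀ s, u s ≤ r) ∧ ∃ ν ∈ cappedOrthant S M, ∑ s, ν s * u s = M * r := by
  classical
  by_cases hu : ∀ s, u s ≤ 0
  · exact ⟨0, le_rfl, hu, 0, zero_mem_cappedOrthant hM, by simp⟩
  · obtain ⟨k, hk⟩ := not_forall.1 hu
    have : Nonempty S := ⟨k⟩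
    obtain ⟨top, htop⟩ := Finite.exists_max u
    exact ⟨u top, (not_le.1 hk).le.trans (htop k), htop, Pi.single top M,
      single_mem_cappedOrthant hM top, by simp [Pi.single_apply]⟩

end CappedOrthant

theorem convexOn_finset_sum {ι E : Type*} [AddCommGroup E] [Module ℝ E] {C : Set E} {J : Finset ι}
    {f : ι → E → ℝ} (hC : Convex ℝ C) (hf : ∀ k ∈ J, ConvexOn ℝ C (f k)) :
    ConvexOn ℝ C fun z => ∑ k ∈ J, f k z := by
  rw [← Finset.sum_fn]
  exact Finset.sum_induction f (ConvexOn ℝ C) (fun _ _ => ConvexOn.add) (convexOn_const 0 hC) hf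

/-- The data of one agent: a compact convex decision set, a convex cost, and the convex
contribution of the agent to the coupling constraints indexed by `S`. -/
structure LocalProblem (S E : Type*) [TopologicalSpace E] [AddCommGroup E] [Module ℝ E] where
  decisionSet : Set E
  cost : E → ℝ
  constraint : E → S → ℝ
  nonempty : decisionSet.Nonempty
  isCompact : IsCompact decisionSet
  convexOn_cost : ConvexOn ℝ decisionSet cost
  convexOn_constraint : ∀ s, ConvexOn ℝ decisionSet fun z => constraint z s
  continuousOn_cost : ContinuousOn cost decisionSet
  continuousOn_constraint : ContinuousOn constraint decisionSet

namespace LocalProblem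

variable {S E : Type*} [TopologicalSpace E] [AddCommGroup E] [Module ℝ E]

/-- The local problem given by convex functions on a whole finite-dimensional space, where
convexity already implies continuity. -/
def ofConvexOnUniv {E : Type*} [NormedAddCommGroup E] [NormedSpace ℝ E] [FiniteDimensional ℝ E]
    {X : Set E} {f : E → ℝ} {g : E → S → ℝ} (hX : X.Nonempty) (hX_compact : IsCompact X)
    (hX_convex : Convex ℝ X) (hf : ConvexOn ℝ Set.univ f)
    (hg : ∀ s, ConvexOn ℝ Set.univ fun z => g z s) : LocalProblem S E where
  decisionSet := X
  cost := f
  constraint := g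
  nonempty := hX
  isCompact := hX_compact
  convexOn_cost := hf.subset (Set.subset_univ X) hX_convex
  convexOn_constraint s := (hg s).subset (Set.subset_univ X) hX_convex
  continuousOn_cost := (hf.continuousOn isOpen_univ).mono (Set.subset_univ X)
  continuousOn_constraint := continuousOn_pi.2 fun s =>
    ((hg s).continuousOn isOpen_univ).mono (Set.subset_univ X)

section Lagrangian

variable [Fintype S] (A : LocalProblem S E) (M : ℝ) (δ ν : S → ℝ)

/-- The local Lagrangian `f(z) + ⟨ν, g(z)⟩`. -/
def lagrangian (z : E) : ℝ := A.cost z + ∑ s, ν s * A.constraint z s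

/-- The local dual function `q(ν)`, the infimum of the Lagrangian over the decision set. -/
noncomputable def dualFunction : ℝ := sInf (A.lagrangian ν '' A.decisionSet)

/-- The objective `q(ν) + ⟨ν, δ⟩` of the dual of the local problem with constraint shift `δ`. -/
noncomputable def dualObjective : ℝ := A.dualFunction ν + ∑ s, ν s * δ s

/-- `(x, ρ)` minimizes the local objective `f(x) + M ρ` over the constraints `g(x) + δ ⪯ ρ 𝟏` and
`ρ ≥ 0`, that is, with constraint shift `δ` and violation `ρ` penalized by `M`. -/
def IsPenalizedMin (x : E) (ρ : ℝ) : Prop :=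
  (x ∈ A.decisionSet ∧ 0 ≤ ρ ∧ ∀ s, A.constraint x s + δ s ≤ ρ) ∧
    ∀ z r, z ∈ A.decisionSet → 0 ≤ r → (∀ s, A.constraint z s + δ s ≤ r) →
      A.cost x + M * ρ ≤ A.cost z + M * r

/-- `ν` maximizes the shifted dual objective over the truncated orthant. -/
def IsDualMax : Prop :=
  ν ∈ cappedOrthant S M ∧ ∀ ν' ∈ cappedOrthant S M, A.dualObjective δ ν' ≤ A.dualObjective δ ν

variable {A M δ ν}

theorem continuousOn_lagrangian : ContinuousOn (A.lagrangian ν) A.decisionSet :=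
  A.continuousOn_cost.add <| continuousOn_finsetSum _ fun s _ =>
    (continuousOn_pi.1 A.continuousOn_constraint s).const_mul (ν s)

theorem convexOn_lagrangian (hν : ∀ s, 0 ≤ ν s) : ConvexOn ℝ A.decisionSet (A.lagrangian ν) :=
  A.convexOn_cost.add <| convexOn_finset_sum A.convexOn_cost.1 fun s _ =>
    (A.convexOn_constraint s).smul (hν s)

theorem dualFunction_le {z : E} (hz : z ∈ A.decisionSet) : A.dualFunction ν ≤ A.lagrangian ν z :=
  csInf_le (A.isCompact.image_of_continuousOn continuousOn_lagrangian).bddBelow ⟨z, hz, rfl⟩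

theorem le_dualFunction {c : ℝ} (h : ∀ z ∈ A.decisionSet, c ≤ A.lagrangian ν z) :
    c ≤ A.dualFunction ν :=
  le_csInf (A.nonempty.image _) (Set.forall_mem_image.2 h)

theorem exists_lagrangian_eq_dualFunction (A : LocalProblem S E) (ν : S → ℝ) :
    ∃ z ∈ A.decisionSet, A.lagrangian ν z = A.dualFunction ν :=
  let ⟨z, hz, hz_eq⟩ := A.isCompact.exists_sInf_image_eq A.nonempty continuousOn_lagrangian
  ⟨z, hz, hz_eq.symm⟩

theorem dualObjective_eq_add (δ' : S → ℝ) :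
    A.dualObjective δ' ν = A.dualObjective δ ν + ∑ s, ν s * (δ' s - δ s) := by
  simp only [dualObjective, mul_sub, Finset.sum_sub_distrib]
  ring

theorem dualObjective_le_of_add_nonpos (hν : ∀ s, 0 ≤ ν s) {z : E} (hz : z ∈ A.decisionSet)
    {δ' : S → ℝ} (hzδ' : ∀ s, A.constraint z s + δ' s ≤ 0) :
    A.dualObjective δ ν ≤ A.cost z + ∑ s, ν s * (δ s - δ' s) := by
  have complementary : ∑ s, ν s * (A.constraint z s + δ' s) ≤ 0 :=
    Finset.sum_nonpos fun s _ => mul_nonpos_of_nonneg_of_nonpos (hν s) (hzδ' s)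
  have weak_duality := A.dualFunction_le (ν := ν) hz
  simp only [lagrangian, dualObjective, mul_add, mul_sub, Finset.sum_add_distrib,
    Finset.sum_sub_distrib] at complementary weak_duality ⊢
  linarith

theorem IsDualMax.dualObjective_le_add_mul {δ' ν' : S → ℝ} {β : ℝ} (hν : A.IsDualMax M δ ν)
    (hν' : ν' ∈ cappedOrthant S M) (hβ : 0 ≤ β) (hδ' : ∀ s, δ' s ≤ δ s + β) :
    A.dualObjective δ' ν' ≤ A.dualObjective δ ν + M * β := by
  rw [dualObjective_eq_add (δ := δ)]
  exact add_le_add (hν.2 ν' hν') <| sum_mul_le_of_mem_cappedOrthant hν' hβ fun s =>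
    sub_le_iff_le_add'.2 (hδ' s)

theorem lagrangian_add_sum (A : LocalProblem S E) (δ ν : S → ℝ) (z : E) :
    A.lagrangian ν z + ∑ s, ν s * δ s = A.cost z + ∑ s, ν s * (A.constraint z s + δ s) := by
  simp only [lagrangian, mul_add, Finset.sum_add_distrib, add_assoc]

theorem exists_isSaddlePointOn_lagrangian [IsTopologicalAddGroup E] [ContinuousSMul ℝ E]
    (A : LocalProblem S E) (hM : 0 ≤ M) (δ : S → ℝ) :
    ∃ z ∈ A.decisionSet, ∃ ν ∈ cappedOrthant S M, IsSaddlePointOn A.decisionSet (cappedOrthant S M)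
      (fun z ν => A.lagrangian ν z + ∑ s, ν s * δ s) z ν := by
  have shifted_eq (z : E) : (fun ν => A.lagrangian ν z + ∑ s, ν s * δ s) =
      fun ν => A.cost z + Fintype.linearCombination ℝ (fun s => A.constraint z s + δ s) ν :=
    funext fun ν => A.lagrangian_add_sum δ ν z
  refine Sion.exists_isSaddlePointOn A.nonempty A.convexOn_cost.1 A.isCompact
    (fun _ _ => ?_) (fun _ hν => ?_) convex_cappedOrthant ⟨0, zero_mem_cappedOrthant hM⟩
    isCompact_cappedOrthant (fun z _ => ?_) (fun z _ => ?_)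
  · exact (continuousOn_lagrangian.add continuousOn_const).lowerSemicontinuousOn
  · exact ((convexOn_lagrangian hν.1).add_const _).quasiconvexOn
  · rw [shifted_eq]
    exact (continuous_const.add
      (LinearMap.continuous_of_finiteDimensional _)).continuousOn.upperSemicontinuousOn
  · rw [shifted_eq]
    exact ((concaveOn_const _ convex_cappedOrthant).add
      (LinearMap.concaveOn _ convex_cappedOrthant)).quasiconcaveOn

theorem IsPenalizedMin.cost_add_le_dualObjective [IsTopologicalAddGroup E] [ContinuousSMul ℝ E]
    (hM : 0 ≤ M) {x : E} {ρ : ℝ} (hx : A.IsPenalizedMin M δ x ρ) (hν : A.IsDualMax M δ ν) :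
    A.cost x + M * ρ ≤ A.dualObjective δ ν := by
  obtain ⟨z, hz, ν₀, hν₀, saddle⟩ := A.exists_isSaddlePointOn_lagrangian hM δ
  obtain ⟨r, hr, hzr, ν₁, hν₁, penalty_eq⟩ :=
    exists_sum_mul_eq_mul_of_forall_le hM fun s => A.constraint z s + δ s
  have lagrangian_eq : A.lagrangian ν₁ z + ∑ s, ν₁ s * δ s = A.cost z + M * r := by
    rw [lagrangian_add_sum, penalty_eq]
  have value_le : A.cost z + M * r - ∑ s, ν₀ s * δ s ≤ A.dualFunction ν₀ :=
    le_dualFunction fun y hy => sub_le_iff_le_add.2 (lagrangian_eq ▸ saddle y hy ν₁ hν₁)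
  calc A.cost x + M * ρ ≤ A.cost z + M * r := hx.2 z r hz hr hzr
    _ ≤ A.dualObjective δ ν₀ := sub_le_iff_le_add.1 value_le
    _ ≤ A.dualObjective δ ν := hν.2 ν₀ hν₀

end Lagrangian

end LocalProblem

/-- A constraint-coupled problem, in which the agents `i : V` choose `z i` in their own decision
sets subject to the joint constraints `∑ i, g_i(z i) ⪯ 0`. -/
abbrev CoupledProblem {V : Type*} (S : Type*) (E : V → Type*) [∀ i, TopologicalSpace (E i)]
    [∀ i, AddCommGroup (E i)] [∀ i, Module ℝ (E i)] :=
  ∀ i, LocalProblem S (E i)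

namespace CoupledProblem

variable {V S : Type*} {E : V → Type*} [∀ i, TopologicalSpace (E i)]
  [∀ i, AddCommGroup (E i)] [∀ i, Module ℝ (E i)] (A : CoupledProblem S E)

/-- The joint decisions that respect the local constraints of all agents. -/
def decisionSet : Set (∀ i, E i) := {z | ∀ i, z i ∈ (A i).decisionSet}

variable {A} in
theorem isCompact_decisionSet : IsCompact A.decisionSet :=
  isCompact_pi_infinite fun i => (A i).isCompact

variable [Fintype V]

/-- The sum of the costs of the agents. -/
def totalCost (z : ∀ i, E i) : ℝ := ∑ i, (A i).cost (z i)

/-- The left-hand side of the joint constraints. -/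
def totalConstraint (z : ∀ i, E i) (s : S) : ℝ := ∑ i, (A i).constraint (z i) s

/-- The decisions that respect the local and the joint constraints. -/
def feasibleSet : Set (∀ i, E i) := {z | z ∈ A.decisionSet ∧ ∀ s, A.totalConstraint z s ≤ 0}

/-- The infimum of the total cost over the feasible decisions. -/
noncomputable def optimalValue : ℝ := sInf (A.totalCost '' A.feasibleSet)

/-- `ν ⪰ 0` is an optimal solution of the Lagrangian dual and the duality gap vanishes. -/
def IsGeometricMultiplier [Fintype S] (ν : S → ℝ) : Prop :=
  (∀ s, 0 ≤ ν s) ∧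
    sInf ((fun z => ∑ i, (A i).lagrangian ν (z i)) '' A.decisionSet) = A.optimalValue

variable {A}

theorem continuousOn_totalCost : ContinuousOn A.totalCost A.decisionSet :=
  continuousOn_finsetSum _ fun i _ =>
    (A i).continuousOn_cost.comp (continuous_apply i).continuousOn fun _ hz => hz i

theorem continuousOn_totalConstraint (s : S) :
    ContinuousOn (fun z => A.totalConstraint z s) A.decisionSet :=
  continuousOn_finsetSum _ fun i _ =>
    (continuousOn_pi.1 (A i).continuousOn_constraint s).comp
      (continuous_apply i).continuousOn fun _ hz => hz i

theorem isCompact_feasibleSet [∀ i, T2Space (E i)] : IsCompact A.feasibleSet := by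
  have feasibleSet_eq : A.feasibleSet = A.decisionSet ∩ A.totalConstraint ⁻¹' Set.Iic 0 := rfl
  have feasibleSet_closed : IsClosed A.feasibleSet := feasibleSet_eq ▸
    (continuousOn_pi.2 continuousOn_totalConstraint).preimage_isClosed_of_isClosed
      isCompact_decisionSet.isClosed isClosed_Iic
  exact isCompact_decisionSet.of_isClosed_subset feasibleSet_closed fun _ hz => hz.1

theorem exists_totalCost_eq_optimalValue [∀ i, T2Space (E i)] (hA : A.feasibleSet.Nonempty) :
    ∃ z ∈ A.feasibleSet, A.totalCost z = A.optimalValue :=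
  let ⟨z, hz, hz_eq⟩ := isCompact_feasibleSet.exists_sInf_image_eq hA
    (continuousOn_totalCost.mono fun _ hz => hz.1)
  ⟨z, hz, hz_eq.symm⟩

section Multiplier

variable [Fintype S] {ν : S → ℝ}

theorem sum_lagrangian (z : ∀ i, E i) :
    ∑ i, (A i).lagrangian ν (z i) = A.totalCost z + ∑ s, ν s * A.totalConstraint z s := by
  simp only [LocalProblem.lagrangian, totalCost, totalConstraint, Finset.sum_add_distrib,
    Finset.mul_sum]
  rw [Finset.sum_comm]

theorem IsGeometricMultiplier.optimalValue_le_sum_lagrangian (hν : A.IsGeometricMultiplier ν)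
    {z : ∀ i, E i} (hz : z ∈ A.decisionSet) :
    A.optimalValue ≤ ∑ i, (A i).lagrangian ν (z i) := by
  rw [← hν.2]
  refine csInf_le ⟨∑ i, (A i).dualFunction ν, ?_⟩ (Set.mem_image_of_mem _ hz)
  rintro _ ⟨y, hy, rfl⟩
  exact Finset.sum_le_sum fun i _ => LocalProblem.dualFunction_le (hy i)

theorem IsGeometricMultiplier.optimalValue_le_sum_dualFunction (hν : A.IsGeometricMultiplier ν) :
    A.optimalValue ≤ ∑ i, (A i).dualFunction ν := by
  choose z hz hz_eq using fun i => (A i).exists_lagrangian_eq_dualFunction ν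
  simpa only [hz_eq] using hν.optimalValue_le_sum_lagrangian (z := z) hz

theorem IsGeometricMultiplier.optimalValue_sub_le_totalCost (hν : A.IsGeometricMultiplier ν)
    {z : ∀ i, E i} (hz : z ∈ A.decisionSet) {R : ℝ}
    (hR : ∀ s, A.totalConstraint z s ≤ R) :
    A.optimalValue - (∑ s, ν s) * R ≤ A.totalCost z := by
  have penalty_le : ∑ s, ν s * A.totalConstraint z s ≤ (∑ s, ν s) * R := by
    rw [Finset.sum_mul]
    exact Finset.sum_le_sum fun s _ => mul_le_mul_of_nonneg_left (hR s) (hν.1 s)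
  linarith [hν.optimalValue_le_sum_lagrangian hz, sum_lagrangian (A := A) (ν := ν) z]

end Multiplier

section DualValue

variable (G : SimpleGraph V) [DecidableRel G.Adj]

/-- The constraint shift `δ_i(s) = ∑_{j ∈ N_i} (l(i, j)(s) - l(j, i)(s))` of agent `i` caused by the
edge variables `l`. -/
def imbalance (l : V → V → S → ℝ) (i : V) (s : S) : ℝ := netFlow G (fun i j => l i j s) i

theorem sum_imbalance (l : V → V → S → ℝ) (s : S) : ∑ i, imbalance G l i s = 0 :=
  sum_netFlow G _

variable [Fintype S]

/-- The sum of the local dual objectives at the multipliers `m`, for the shifts caused by `l`. -/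
noncomputable def dualValue (A : CoupledProblem S E) (l : V → V → S → ℝ) (m : V → S → ℝ) : ℝ :=
  ∑ i, (A i).dualObjective (imbalance G l i) (m i)

variable {G} {M : ℝ} {ν : S → ℝ} {l l' : V → V → S → ℝ} {m m' : V → S → ℝ}

theorem IsGeometricMultiplier.optimalValue_le_dualValue (hν : A.IsGeometricMultiplier ν)
    (hνM : ∑ s, ν s ≤ M) (hm : ∀ i, (A i).IsDualMax M (imbalance G l i) (m i)) :
    A.optimalValue ≤ A.dualValue G l m := calc
  A.optimalValue ≤ ∑ i, (A i).dualFunction ν := hν.optimalValue_le_sum_dualFunction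
  _ = ∑ i, (A i).dualObjective (imbalance G l i) ν := by
    simp only [LocalProblem.dualObjective, Finset.sum_add_distrib]
    rw [Finset.sum_comm]
    simp only [← Finset.mul_sum, sum_imbalance, mul_zero, Finset.sum_const_zero, add_zero]
  _ ≤ A.dualValue G l m := Finset.sum_le_sum fun i _ => (hm i).2 ν ⟨hν.1, hνM⟩

theorem exists_forall_dualValue_sub_le [∀ i, T2Space (E i)] (hG : G.Connected)
    (hA : A.feasibleSet.Nonempty) :
    ∃ lopt : V → V → S → ℝ, ∀ (l : V → V → S → ℝ) (m : V → S → ℝ), (∀ i s, 0 ≤ m i s) →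
      A.dualValue G l m - A.optimalValue ≤ ∑ s, ∑ i, m i s * imbalance G (l - lopt) i s := by
  obtain ⟨z, hz, hz_eq⟩ := exists_totalCost_eq_optimalValue hA
  choose lopt hlopt using fun s => exists_add_netFlow_nonpos hG (hz.2 s)
  refine ⟨fun i j s => lopt s i j, fun l m hm => ?_⟩
  have imbalance_sub (i : V) (s : S) : imbalance G (l - fun i j s => lopt s i j) i s =
      imbalance G l i s - netFlow G (lopt s) i :=
    congrFun (map_sub (netFlow G) _ _) i
  rw [← hz_eq, Finset.sum_comm, dualValue, totalCost, sub_le_iff_le_add',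
    ← Finset.sum_add_distrib]
  simp only [imbalance_sub]
  exact Finset.sum_le_sum fun i _ =>
    LocalProblem.dualObjective_le_of_add_nonpos (hm i) (hz.1 i) fun s => hlopt s i

variable {γ : ℝ}

theorem dualValue_le_of_step (hγ : 0 ≤ γ) (hM : 0 ≤ M)
    (hm : ∀ i, (A i).IsDualMax M (imbalance G l i) (m i)) (hm' : ∀ i, m' i ∈ cappedOrthant S M)
    (hstep : ∀ i j, G.Adj i j → l' i j = l i j - γ • (m i - m j)) :
    A.dualValue G l' m' ≤ A.dualValue G l m + (2 * M ^ 2 * ∑ i, G.degree i) * γ := by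
  have agent_step (i : V) : (A i).dualObjective (imbalance G l' i) (m' i) ≤
      (A i).dualObjective (imbalance G l i) (m i) + M * (G.degree i * (2 * γ * M)) := by
    refine (hm i).dualObjective_le_add_mul (hm' i) (by positivity) fun s => ?_
    refine netFlow_le_of_step (m := fun i => m i s) hγ
      (fun i j => abs_sub_le_of_mem_cappedOrthant (hm i).1 (hm j).1 s) (fun i j hij => ?_) i
    rw [hstep i j hij, Pi.sub_apply, Pi.smul_apply, Pi.sub_apply, smul_eq_mul]
  calc A.dualValue G l' m'
      ≤ ∑ i, ((A i).dualObjective (imbalance G l i) (m i) + M * (G.degree i * (2 * γ * M))) :=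
        Finset.sum_le_sum fun i _ => agent_step i
    _ = A.dualValue G l m + (2 * M ^ 2 * ∑ i, G.degree i) * γ := by
        rw [Finset.sum_add_distrib, dualValue]
        push_cast
        rw [Finset.mul_sum, Finset.sum_mul]
        congr 1
        exact Finset.sum_congr rfl fun i _ => by ring

variable (G) in
/-- The squared distance between the edge variables `l` and `l'`, summed over all ordered pairs of
adjacent vertices and all coupling constraints. -/
def flowDistSq (l l' : V → V → S → ℝ) : ℝ :=
  ∑ s, flowEnergy G fun i j => (l - l') i j s

theorem flowDistSq_nonneg (l l' : V → V → S → ℝ) : 0 ≤ flowDistSq G l l' :=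
  Finset.sum_nonneg fun _ _ => flowEnergy_nonneg G _

theorem flowDistSq_le_of_step (lopt : V → V → S → ℝ) (hm : ∀ i, m i ∈ cappedOrthant S M)
    (hstep : ∀ i j, G.Adj i j → l' i j = l i j - γ • (m i - m j)) :
    flowDistSq G l' lopt + 2 * γ * ∑ s, ∑ i, m i s * imbalance G (l - lopt) i s ≤
      flowDistSq G l lopt + (Fintype.card S * (∑ i, G.degree i) * M ^ 2) * γ ^ 2 := by
  have component_step (s : S) : flowEnergy G (fun i j => (l' - lopt) i j s) +
      2 * γ * ∑ i, m i s * imbalance G (l - lopt) i s ≤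
      flowEnergy G (fun i j => (l - lopt) i j s) + ((∑ i, G.degree i) * M ^ 2) * γ ^ 2 := by
    have energy_eq := flowEnergy_eq_of_step (G := G) (a := fun i j => (l - lopt) i j s)
      (a' := fun i j => (l' - lopt) i j s) (m := fun i => m i s) (γ := γ) fun i j hij => by
        simp only [Pi.sub_apply, hstep i j hij, Pi.smul_apply, smul_eq_mul]
        ring
    have gradient_le := flowEnergy_le_of_abs_le (G := G) (a := fun i j => m i s - m j s)
      fun i j => abs_sub_le_of_mem_cappedOrthant (hm i) (hm j) s
    rw [energy_eq]
    simp only [imbalance]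
    linarith [mul_le_mul_of_nonneg_left gradient_le (sq_nonneg γ)]
  have sum_step := Finset.sum_le_sum fun s (_ : s ∈ Finset.univ) => component_step s
  simp only [Finset.sum_add_distrib, ← Finset.mul_sum, Finset.sum_const, Finset.card_univ,
    nsmul_eq_mul] at sum_step
  rw [flowDistSq, flowDistSq]
  linarith

end DualValue

section Algorithm

variable [Fintype S] (A) (G : SimpleGraph V) [DecidableRel G.Adj] (M : ℝ) (γ : ℕ → ℝ)
  (lam : ℕ → V → V → S → ℝ) (x : ℕ → ∀ i, E i) (ρ : ℕ → V → ℝ) (μ : ℕ → V → S → ℝ)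

/-- A run of the distributed algorithm: every agent solves its penalized local problem and its dual
for the current shift, after which neighbors move their edge variables along the difference of their
multipliers. Edge variables of nonadjacent pairs are unconstrained. -/
structure IsRun : Prop where
  primal : ∀ t i, (A i).IsPenalizedMin M (imbalance G (lam t) i) (x (t + 1) i) (ρ (t + 1) i)
  dual : ∀ t i, (A i).IsDualMax M (imbalance G (lam t) i) (μ (t + 1) i)
  update : ∀ t i j, G.Adj i j → lam (t + 1) i j = lam t i j - γ t • (μ (t + 1) i - μ (t + 1) j)

namespace IsRun

variable {A G M γ lam x ρ μ} {ν : S → ℝ}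

theorem summable_mul_dualValue_sub [∀ i, T2Space (E i)] (run : A.IsRun G M γ lam x ρ μ)
    (hG : G.Connected) (hA : A.feasibleSet.Nonempty) (hν : A.IsGeometricMultiplier ν)
    (hνM : ∑ s, ν s ≤ M) (hγ : ∀ t, 0 ≤ γ t) (hγ_sq : Summable fun t => γ t ^ 2) :
    Summable fun t => γ t * (A.dualValue G (lam t) (μ (t + 1)) - A.optimalValue) := by
  obtain ⟨lopt, hlopt⟩ := exists_forall_dualValue_sub_le hG hA
  refine (summable_mul_left_iff two_ne_zero).1 <| summable_of_add_le_add
    (fun t => flowDistSq_nonneg (G := G) (lam t) lopt) (fun t => ?_)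
    (hγ_sq.mul_left (Fintype.card S * (∑ i, G.degree i) * M ^ 2)) (fun t => ?_)
  · exact mul_nonneg zero_le_two <| mul_nonneg (hγ t) <|
      sub_nonneg.2 (hν.optimalValue_le_dualValue hνM (run.dual t))
  · have gap_le := hlopt (lam t) (μ (t + 1)) fun i => (run.dual t i).1.1
    have distance_step :=
      flowDistSq_le_of_step lopt (fun i => (run.dual t i).1) (run.update t)
    linarith [mul_le_mul_of_nonneg_left gap_le (hγ t)]

theorem tendsto_dualValue [∀ i, T2Space (E i)] (run : A.IsRun G M γ lam x ρ μ)
    (hG : G.Connected) (hA : A.feasibleSet.Nonempty) (hν : A.IsGeometricMultiplier ν)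
    (hνM : ∑ s, ν s ≤ M) (hγ : ∀ t, 0 ≤ γ t) (hγ_div : ¬ Summable γ)
    (hγ_sq : Summable fun t => γ t ^ 2) :
    Tendsto (fun t => A.dualValue G (lam t) (μ (t + 1))) atTop (𝓝 A.optimalValue) := by
  have hM : 0 ≤ M := (Finset.sum_nonneg fun s _ => hν.1 s).trans hνM
  refine tendsto_sub_nhds_zero_iff.1 <| tendsto_zero_of_summable_mul
    (C := 2 * M ^ 2 * ∑ i, G.degree i) (by positivity) hγ
    (tendsto_zero_of_summable_sq hγ_sq) hγ_div
    (run.summable_mul_dualValue_sub hG hA hν hνM hγ hγ_sq) (fun t => ?_) (fun t => ?_)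
  · exact sub_nonneg.2 (hν.optimalValue_le_dualValue hνM (run.dual t))
  · linarith [dualValue_le_of_step (hγ t) hM (run.dual t) (fun i => (run.dual (t + 1) i).1)
      (run.update t)]

theorem totalConstraint_le (run : A.IsRun G M γ lam x ρ μ) (t : ℕ) (s : S) :
    A.totalConstraint (x (t + 1)) s ≤ ∑ i, ρ (t + 1) i := calc
  A.totalConstraint (x (t + 1)) s
      = ∑ i, ((A i).constraint (x (t + 1) i) s + imbalance G (lam t) i s) := by
        rw [Finset.sum_add_distrib, sum_imbalance, add_zero, totalConstraint]
  _ ≤ ∑ i, ρ (t + 1) i := Finset.sum_le_sum fun i _ => (run.primal t i).1.2.2 s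

theorem totalCost_add_le_dualValue [∀ i, IsTopologicalAddGroup (E i)]
    [∀ i, ContinuousSMul ℝ (E i)] (run : A.IsRun G M γ lam x ρ μ) (hM : 0 ≤ M) (t : ℕ) :
    A.totalCost (x (t + 1)) + M * ∑ i, ρ (t + 1) i ≤ A.dualValue G (lam t) (μ (t + 1)) := by
  rw [totalCost, Finset.mul_sum, ← Finset.sum_add_distrib]
  exact Finset.sum_le_sum fun i _ =>
    (run.primal t i).cost_add_le_dualObjective hM (run.dual t i)

theorem tendsto_sum_violation_and_tendsto_totalCost [∀ i, T2Space (E i)]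
    [∀ i, IsTopologicalAddGroup (E i)] [∀ i, ContinuousSMul ℝ (E i)]
    (run : A.IsRun G M γ lam x ρ μ) (hG : G.Connected) (hA : A.feasibleSet.Nonempty)
    (hν : A.IsGeometricMultiplier ν) (hνM : ∑ s, ν s < M) (hγ : ∀ t, 0 ≤ γ t)
    (hγ_div : ¬ Summable γ) (hγ_sq : Summable fun t => γ t ^ 2) :
    Tendsto (fun t => ∑ i, ρ (t + 1) i) atTop (𝓝 0) ∧
      Tendsto (fun t => A.totalCost (x (t + 1))) atTop (𝓝 A.optimalValue) := by
  have hM : 0 ≤ M := (Finset.sum_nonneg fun s _ => hν.1 s).trans hνM.le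
  exact tendsto_of_penalty_gap hνM
    (fun t => Finset.sum_nonneg fun i _ => (run.primal t i).1.2.1)
    (fun t => hν.optimalValue_sub_le_totalCost (fun i => (run.primal t i).1.1)
      (run.totalConstraint_le t))
    (run.totalCost_add_le_dualValue hM)
    (run.tendsto_dualValue hG hA hν hνM.le hγ hγ_div hγ_sq)

end IsRun

end Algorithm

theorem mem_feasibleSet_and_totalCost_eq_of_mapClusterPt [∀ i, T2Space (E i)] {y : ℕ → ∀ i, E i}
    {R : ℕ → ℝ} {v : ℝ} {z : ∀ i, E i} (hz : MapClusterPt z atTop y)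
    (hy : ∀ t, y t ∈ A.decisionSet) (hyR : ∀ t s, A.totalConstraint (y t) s ≤ R t)
    (hR : Tendsto R atTop (𝓝 0)) (hv : Tendsto (fun t => A.totalCost (y t)) atTop (𝓝 v)) :
    z ∈ A.feasibleSet ∧ A.totalCost z = v := by
  obtain ⟨U, hU, y_tendsto⟩ := mapClusterPt_iff_ultrafilter.1 hz
  have hz_mem : z ∈ A.decisionSet :=
    isCompact_decisionSet.isClosed.mem_of_tendsto y_tendsto (.of_forall hy)
  have y_tendsto_within : Tendsto y U (𝓝[A.decisionSet] z) :=
    tendsto_nhdsWithin_iff.2 ⟨y_tendsto, .of_forall hy⟩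
  refine ⟨⟨hz_mem, fun s => ?_⟩, ?_⟩
  · exact le_of_tendsto_of_tendsto' ((continuousOn_totalConstraint s z hz_mem).tendsto.comp
      y_tendsto_within) (hR.mono_left hU) fun t => hyR t s
  · exact tendsto_nhds_unique ((continuousOn_totalCost z hz_mem).tendsto.comp y_tendsto_within)
      (hv.mono_left hU)

end CoupledProblem

theorem stmt_19_general {V S : Type*} [Fintype V] [Fintype S] {E : V → Type*}
    [∀ i, AddCommGroup (E i)] [∀ i, Module ℝ (E i)] [∀ i, TopologicalSpace (E i)]
    [∀ i, IsTopologicalAddGroup (E i)] [∀ i, ContinuousSMul ℝ (E i)] [∀ i, T2Space (E i)]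
    {A : CoupledProblem S E} {G : SimpleGraph V} [DecidableRel G.Adj] (hG : G.Connected)
    (hA : A.feasibleSet.Nonempty) {μstar : S → ℝ} (hμstar : A.IsGeometricMultiplier μstar)
    {M : ℝ} (hM : ∑ s, μstar s < M) {γ : ℕ → ℝ} (hγ : ∀ t, 0 ≤ γ t) (hγ_div : ¬ Summable γ)
    (hγ_sq : Summable fun t => γ t ^ 2) {lam : ℕ → V → V → S → ℝ} {x : ℕ → ∀ i, E i}
    {ρ : ℕ → V → ℝ} {μ : ℕ → V → S → ℝ} (run : A.IsRun G M γ lam x ρ μ) {z : ∀ i, E i}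
    (hz : MapClusterPt z atTop x) :
    z ∈ A.feasibleSet ∧ A.totalCost z = A.optimalValue := by
  obtain ⟨violation_tendsto, cost_tendsto⟩ :=
    run.tendsto_sum_violation_and_tendsto_totalCost hG hA hμstar hM hγ hγ_div hγ_sq
  have hz_succ : MapClusterPt z atTop (x ∘ (· + 1)) := by
    rwa [mapClusterPt_comp, map_add_atTop_eq_nat]
  exact CoupledProblem.mem_feasibleSet_and_totalCost_eq_of_mapClusterPt hz_succ
    (fun t i => (run.primal t i).1.1) run.totalConstraint_le violation_tendsto cost_tendsto

/-- Theorem 1(ii) of the paper: primal recovery.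
Under the Slater condition, the exact-penalty condition `M > ∑_s μ*_s` on a dual
optimal multiplier `μ*`, and diminishing non-summable square-summable step sizes,
every cluster point of the local primal iterates `(x_1^t,…,x_N^t)` of the
distributed primal decomposition-duality algorithm is a feasible optimal
solution of the original constraint-coupled problem. -/
theorem stmt_19 {N : ℕ} (hN : 1 ≤ N) {S : Type} [Fintype S] [Nonempty S]
    (G : SimpleGraph (Fin N)) [DecidableRel G.Adj] (hG : G.Connected)
    (n : Fin N → ℕ)
    (X : ∀ i, Set (Fin (n i) → ℝ))
    (hXne : ∀ i, (X i).Nonempty) (hXcp : ∀ i, IsCompact (X i)) (hXcv : ∀ i, Convex ℝ (X i))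
    (f : ∀ i, (Fin (n i) → ℝ) → ℝ) (hf : ∀ i, ConvexOn ℝ Set.univ (f i))
    (g : ∀ i, (Fin (n i) → ℝ) → (S → ℝ))
    (hg : ∀ i s, ConvexOn ℝ Set.univ (fun x => g i x s))
    -- (a) Slater condition and optimal value
    (hSlater : ∃ xbar : ∀ i, Fin (n i) → ℝ,
      (∀ i, xbar i ∈ X i) ∧ ∀ s, ∑ i, g i (xbar i) s < 0)
    (fstar : ℝ)
    (hfstar : fstar = sInf {y | ∃ x : ∀ i, Fin (n i) → ℝ,
      (∀ i, x i ∈ X i) ∧ (∀ s, ∑ i, g i (x i) s ≤ 0) ∧ ∑ i, f i (x i) = y})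
    -- (b) geometric multiplier and penalty parameter
    (μstar : S → ℝ) (hμpos : ∀ s, 0 ≤ μstar s)
    (hμopt : sInf {y | ∃ x : ∀ i, Fin (n i) → ℝ, (∀ i, x i ∈ X i) ∧
      (∑ i, (f i (x i) + ∑ s, μstar s * g i (x i) s)) = y} = fstar)
    (M : ℝ) (hM : M > ∑ s, μstar s)
    -- (c) step sizes
    (γ : ℕ → ℝ) (hγpos : ∀ t, 0 ≤ γ t)
    (hγdiv : Filter.Tendsto (fun T => ∑ t ∈ Finset.range T, γ t) Filter.atTop Filter.atTop)
    (hγsq : Summable (fun t => (γ t) ^ 2))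
    -- algorithm iterates
    (lam : ℕ → Fin N → Fin N → (S → ℝ))
    (x : ℕ → ∀ i, Fin (n i) → ℝ) (ρ : ℕ → Fin N → ℝ) (μ : ℕ → Fin N → (S → ℝ))
    -- (1) primal update: (x_i^{t+1}, ρ_i^{t+1}) solves the local relaxed problem
    (hprim : ∀ t i,
      (x (t+1) i ∈ X i ∧ 0 ≤ ρ (t+1) i ∧
        (∀ s, g i (x (t+1) i) s
          + (∑ j ∈ G.neighborFinset i, (lam t i j s - lam t j i s)) ≤ ρ (t+1) i))
      ∧ ∀ (x' : Fin (n i) → ℝ) (r : ℝ), x' ∈ X i → 0 ≤ r →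
          (∀ s, g i x' s + (∑ j ∈ G.neighborFinset i, (lam t i j s - lam t j i s)) ≤ r) →
          f i (x (t+1) i) + M * ρ (t+1) i ≤ f i x' + M * r)
    -- (2) dual update: μ_i^{t+1} maximizes q_i(·) + ⟨·, δ_i^t⟩ over Δ_M
    (hdual : ∀ t i,
      ((∀ s, 0 ≤ μ (t+1) i s) ∧ ∑ s, μ (t+1) i s ≤ M)
      ∧ ∀ ν : S → ℝ, (∀ s, 0 ≤ ν s) → ∑ s, ν s ≤ M →
          sInf {y | ∃ z ∈ X i, f i z + ∑ s, ν s * g i z s = y}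
            + ∑ s, ν s * (∑ j ∈ G.neighborFinset i, (lam t i j s - lam t j i s))
          ≤ sInf {y | ∃ z ∈ X i, f i z + ∑ s, μ (t+1) i s * g i z s = y}
            + ∑ s, μ (t+1) i s * (∑ j ∈ G.neighborFinset i, (lam t i j s - lam t j i s)))
    -- (3) multiplier update
    (hlam : ∀ t i j, (G.Adj i j →
        lam (t+1) i j = lam t i j - γ t • (μ (t+1) i - μ (t+1) j))
      ∧ (¬ G.Adj i j → lam (t+1) i j = lam t i j)) :
    ∀ xbar : ∀ i, Fin (n i) → ℝ,
      MapClusterPt xbar Filter.atTop (fun t => x t) →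
      (∀ i, xbar i ∈ X i) ∧ (∀ s, ∑ i, g i (xbar i) s ≤ 0)
      ∧ ∑ i, f i (xbar i) = fstar := by
  let A : CoupledProblem S fun i => Fin (n i) → ℝ := fun i =>
    .ofConvexOnUniv (hXne i) (hXcp i) (hXcv i) (hf i) (hg i)
  have optimalValue_eq : A.optimalValue = fstar := by
    simp only [hfstar, CoupledProblem.optimalValue, Set.image, CoupledProblem.feasibleSet,
      Set.mem_ofPred_eq, and_assoc]
    rfl
  have run : A.IsRun G M γ lam x ρ μ :=
    ⟨hprim, fun t i => (hdual t i).imp_right fun h ν hν => h ν hν.1 hν.2,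
      fun t i j => (hlam t i j).1⟩
  intro z hz
  obtain ⟨⟨z_mem, z_constraint⟩, z_optimal⟩ := stmt_19_general (A := A) hG
    (hSlater.imp fun _ h => h.imp_right fun h s => (h s).le)
    ⟨hμpos, hμopt.trans optimalValue_eq.symm⟩ hM hγpos
    ((not_summable_iff_tendsto_nat_atTop_of_nonneg hγpos).2 hγdiv) hγsq run hz
  exact ⟨z_mem, z_constraint, z_optimal.trans optimalValue_eq⟩
end
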